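/- Fix an integer d ≥ 3 and a real p with 1/(d-1) < p < 1. For every b > 0 there exist δ, c, C, R > 0 such that: if 𝒢 is a regular (b,d)-expander on n vertices with girth exceeding R, then with probability at least 1 − C·exp(−c n), a largest connected component C₁ of the random graph G ∼ 𝒢_p has no separator of size at most δn; here a set S of vertices of a graph H on m vertices is a separator if there is a partition V(H) = A ∪ B ∪ S into pairwise disjoint sets such that H has no edges between A and B and |A| ≤ 2m/3 and |B| ≤ 2m/3. -/

import Mathlib

open scoped Classical symmDiff

noncomputable section

namespace Percolation

variable {V : Type} [Fintype V] [DecidableEq V]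

/-- The edge set of `G` as a finset. -/
noncomputable def edgeFinset' (G : SimpleGraph V) : Finset (Sym2 V) :=
  Finset.univ.filter (· ∈ G.edgeSet)

/-- Probability that bond percolation on `G` with parameter `p` produces a spanning
subgraph satisfying `P`. -/
noncomputable def percProb (G : SimpleGraph V) (p : ℝ) (P : SimpleGraph V → Prop) : ℝ :=
  ∑ s ∈ (edgeFinset' G).powerset,
    (p ^ s.card * (1 - p) ^ ((edgeFinset' G).card - s.card)) *
      (if P (SimpleGraph.fromEdgeSet (↑s)) then 1 else 0)

/-- Joint probability for two independent bond percolations on `G`. -/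
noncomputable def percProb2 (G : SimpleGraph V) (p₁ p₂ : ℝ)
    (P : SimpleGraph V → SimpleGraph V → Prop) : ℝ :=
  ∑ s ∈ (edgeFinset' G).powerset, ∑ t ∈ (edgeFinset' G).powerset,
    (p₁ ^ s.card * (1 - p₁) ^ ((edgeFinset' G).card - s.card)) *
    (p₂ ^ t.card * (1 - p₂) ^ ((edgeFinset' G).card - t.card)) *
      (if P (SimpleGraph.fromEdgeSet (↑s)) (SimpleGraph.fromEdgeSet (↑t)) then 1 else 0)

/-- Number of edges of `G` joining `S` to its complement. -/
noncomputable def cutCard (G : SimpleGraph V) (S : Finset V) : ℕ :=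
  ((edgeFinset' G).filter (fun e => ∃ x ∈ S, ∃ y, y ∉ S ∧ e = s(x, y))).card

/-- `G` is a `(b,d)`-expander: max degree at most `d`, and every vertex set of size at most
`n/2` has at least `b|S|` edges to its complement. -/
def IsExpander (G : SimpleGraph V) (b : ℝ) (d : ℕ) : Prop :=
  (∀ v, (G.neighborSet v).ncard ≤ d) ∧
  ∀ S : Finset V, (S.card : ℝ) ≤ Fintype.card V / 2 → b * S.card ≤ cutCard G S

/-- `G` is a regular `(b,d)`-expander. -/
def IsRegularExpander (G : SimpleGraph V) (b : ℝ) (d : ℕ) : Prop :=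
  IsExpander G b d ∧ ∀ v, (G.neighborSet v).ncard = d

/-- The vertices of the connected component `c` of `G`. -/
noncomputable def compVerts (G : SimpleGraph V) (c : G.ConnectedComponent) : Finset V :=
  Finset.univ.filter (fun v => G.connectedComponentMk v = c)

/-- The edges of the connected component `c` of `G`. -/
noncomputable def compEdges (G : SimpleGraph V) (c : G.ConnectedComponent) : Finset (Sym2 V) :=
  (edgeFinset' G).filter (fun e => ∀ v ∈ e, G.connectedComponentMk v = c)

/-- `c` is a largest connected component of `G`. -/
def IsLargestComp (G : SimpleGraph V) (c : G.ConnectedComponent) : Prop :=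
  ∀ c' : G.ConnectedComponent, (compVerts G c').card ≤ (compVerts G c).card

/-- The 2-core of the connected component `c` of `G` : the maximal subgraph of `G`
supported inside `c` all of whose vertices have degree at least 2. -/
noncomputable def twoCoreComp (G : SimpleGraph V) (c : G.ConnectedComponent) : SimpleGraph V :=
  sSup {H : SimpleGraph V | H ≤ G ∧ (∀ v ∈ H.support, G.connectedComponentMk v = c) ∧
    ∀ v ∈ H.support, 2 ≤ (H.neighborSet v).ncard}

/-- The event `A^R_{x,y}(H)`: the connected component of `y` in `H` with the edge `xy`
removed (if present) has at least `R` vertices. -/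
def eventA (H : SimpleGraph V) (R : ℕ) (x y : V) : Prop :=
  R ≤ (compVerts (H.deleteEdges {s(x, y)})
        ((H.deleteEdges {s(x, y)}).connectedComponentMk y)).card

/-- `E₁(H)`: edges `xy` of `H` such that `A^R_{x,y}` or `A^R_{y,x}` holds. -/
noncomputable def E1set (H : SimpleGraph V) (R : ℕ) : Finset (Sym2 V) :=
  (edgeFinset' H).filter (fun e => ∃ x y, e = s(x, y) ∧ (eventA H R x y ∨ eventA H R y x))

/-- `V₁(H)`: vertices `x` such that for some `y`, `xy ∈ E(H)` and `A^R_{x,y}` holds. -/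
noncomputable def V1set (H : SimpleGraph V) (R : ℕ) : Finset V :=
  Finset.univ.filter (fun x => ∃ y, H.Adj x y ∧ eventA H R x y)

/-- `E₂(H)`: edges `xy` of `H` such that both `A^R_{x,y}` and `A^R_{y,x}` hold. -/
noncomputable def E2set (H : SimpleGraph V) (R : ℕ) : Finset (Sym2 V) :=
  (edgeFinset' H).filter (fun e => ∃ x y, e = s(x, y) ∧ eventA H R x y ∧ eventA H R y x)

/-- `V₂(H)`: vertices incident to an edge of `E₂(H)`. -/
noncomputable def V2set (H : SimpleGraph V) (R : ℕ) : Finset V :=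
  Finset.univ.filter (fun x => ∃ e ∈ E2set H R, x ∈ e)

/-- `V̄₁(H)`: vertices `y` such that `A^R_{x,y}(H)` holds for some `x`. -/
noncomputable def Vbar1 (H : SimpleGraph V) (R : ℕ) : Finset V :=
  Finset.univ.filter (fun y => ∃ x, eventA H R x y)

/-- `S` is `k`-thick in `H`: a union of pairwise disjoint subsets, each of size at least
`k`, each inducing a connected subgraph of `H`. -/
def IsThick (H : SimpleGraph V) (k : ℕ) (S : Finset V) : Prop :=
  ∃ P : Finset (Finset V),
    (∀ T ∈ P, k ≤ T.card ∧ (H.induce (↑T : Set V)).Connected) ∧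
    (↑P : Set (Finset V)).PairwiseDisjoint id ∧ S = P.biUnion id

/-- `S` is a separator of `K`. -/
def IsSeparator {W : Type} [Fintype W] (K : SimpleGraph W) (S : Finset W) : Prop :=
  ∃ A B : Finset W, Disjoint A B ∧ Disjoint A S ∧ Disjoint B S ∧
    (∀ w, w ∈ A ∨ w ∈ B ∨ w ∈ S) ∧
    (∀ a ∈ A, ∀ b ∈ B, ¬ K.Adj a b) ∧
    3 * A.card ≤ 2 * Fintype.card W ∧ 3 * B.card ≤ 2 * Fintype.card W

/-!
Write `1 - p = (1 - p₁) (1 - p₂)` with `p₁ < p` close to `p` and still above `1 / (d - 1)`, so that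
percolation at level `p` is percolation at level `p₁` sprinkled with an independent percolation at
level `p₂`. Call a vertex a survivor if an open non-backtracking walk of some large constant length
starts at it. Below the girth the graph looks like a tree, so survival has the probability given by
the Galton–Watson recursion, and bounded differences concentrate the number of survivors. These
probabilities at `p` and `p₁` differ little, uniformly in the length of the walk.

A maximal family of disjoint balls of size `> k` in the first percolation splits its survivors into
at most `n / (k + 2)` connected pieces. If two unions of pieces are both of linear size, expansion
provides linearly many edge-disjoint connectors of bounded length between them, and sprinkling
opens so many of these that they stay connected after the deletion of a few edges. The failure
probability beats the number `4 ^ (n / (k + 2))` of pairs of unions once `k` is large. Hence the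
largest component contains most survivors of the first percolation and, being itself made of
survivors of the union, little else; a small separator of it would leave on both sides linearly
many vertices in pieces that it misses, contradicting the robust connection.
-/

section RandomSubset

variable {α ι : Type*} {E : Finset α} {p : ℝ}

/-- The expectation of `f` at the random subset of `E` that retains each element independently
with probability `p`. -/
def bernoulliExp (E : Finset α) (p : ℝ) (f : Finset α → ℝ) : ℝ :=
  ∑ s ∈ E.powerset, p ^ s.card * (1 - p) ^ (E.card - s.card) * f s

/-- The probability that the random subset of `E` retaining each element independently with
probability `p` satisfies `P`. -/
def bernoulliProb (E : Finset α) (p : ℝ) (P : Finset α → Prop) : ℝ :=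
  bernoulliExp E p fun s => if P s then 1 else 0

/-- The value of `f` at a finite set depends only on the trace of that set on `A`. -/
def DeterminedBy {β : Type*} (A : Set α) (f : Finset α → β) : Prop :=
  ∀ ⦃s t : Finset α⦄, (∀ e ∈ A, e ∈ s ↔ e ∈ t) → f s = f t

theorem bernoulliExp_empty (p : ℝ) (f : Finset α → ℝ) : bernoulliExp ∅ p f = f ∅ := by
  simp [bernoulliExp]

theorem bernoulliExp_insert {e : α} (he : e ∉ E) (p : ℝ) (f : Finset α → ℝ) :
    bernoulliExp (insert e E) p f =
      p * bernoulliExp E p (fun s => f (insert e s)) + (1 - p) * bernoulliExp E p f := by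
  unfold bernoulliExp
  rw [Finset.sum_powerset_insert he, add_comm, Finset.mul_sum, Finset.mul_sum]
  congr 1
  · refine Finset.sum_congr rfl fun s hs => ?_
    have hes : e ∉ s := fun h => he (Finset.mem_powerset.1 hs h)
    rw [Finset.card_insert_of_notMem hes, Finset.card_insert_of_notMem he,
      Nat.add_sub_add_right]
    ring
  · refine Finset.sum_congr rfl fun s hs => ?_
    rw [Finset.card_insert_of_notMem he,
      Nat.sub_add_comm (Finset.card_le_card (Finset.mem_powerset.1 hs))]
    ring

theorem bernoulliExp_add (E : Finset α) (p : ℝ) (f g : Finset α → ℝ) :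
    bernoulliExp E p (fun s => f s + g s) = bernoulliExp E p f + bernoulliExp E p g := by
  simp [bernoulliExp, mul_add, Finset.sum_add_distrib]

theorem bernoulliExp_const_mul (E : Finset α) (p c : ℝ) (f : Finset α → ℝ) :
    bernoulliExp E p (fun s => c * f s) = c * bernoulliExp E p f := by
  simp only [bernoulliExp, Finset.mul_sum, mul_left_comm c]

theorem bernoulliExp_neg (E : Finset α) (p : ℝ) (f : Finset α → ℝ) :
    bernoulliExp E p (fun s => -f s) = -bernoulliExp E p f := by
  simp [bernoulliExp]

theorem bernoulliExp_sum (E : Finset α) (p : ℝ) (I : Finset ι) (f : ι → Finset α → ℝ) :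
    bernoulliExp E p (fun s => ∑ i ∈ I, f i s) = ∑ i ∈ I, bernoulliExp E p (f i) := by
  simp only [bernoulliExp, Finset.mul_sum]
  exact Finset.sum_comm

theorem bernoulliExp_const (E : Finset α) (p c : ℝ) : bernoulliExp E p (fun _ => c) = c := by
  induction E using Finset.induction_on with
  | empty => exact bernoulliExp_empty _ _
  | insert e E he ih => rw [bernoulliExp_insert he, ih]; ring

theorem bernoulliExp_congr {f g : Finset α → ℝ} (h : ∀ s ⊆ E, f s = g s) :
    bernoulliExp E p f = bernoulliExp E p g :=
  Finset.sum_congr rfl fun s hs => by rw [h s (Finset.mem_powerset.1 hs)]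

theorem bernoulliExp_mono (h0 : 0 ≤ p) (h1 : p ≤ 1) {f g : Finset α → ℝ}
    (h : ∀ s ⊆ E, f s ≤ g s) : bernoulliExp E p f ≤ bernoulliExp E p g := by
  have : 0 ≤ 1 - p := by linarith
  exact Finset.sum_le_sum fun s hs =>
    mul_le_mul_of_nonneg_left (h s (Finset.mem_powerset.1 hs)) (by positivity)

theorem bernoulliExp_sprinkle (E : Finset α) {p₁ p₂ : ℝ} (hp : 1 - p = (1 - p₁) * (1 - p₂))
    (f : Finset α → ℝ) :
    bernoulliExp E p f =
      bernoulliExp E p₁ fun s => bernoulliExp E p₂ fun t => f (s ∪ t) := by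
  obtain rfl : p = 1 - (1 - p₁) * (1 - p₂) := by linarith
  induction E using Finset.induction_on generalizing f with
  | empty => simp [bernoulliExp_empty]
  | insert e E he ih =>
    simp only [bernoulliExp_insert he, bernoulliExp_add, bernoulliExp_const_mul,
      Finset.insert_union, Finset.union_insert, Finset.insert_idem, ih]
    ring

theorem DeterminedBy.comp_insert {β : Type*} {A : Set α} {f : Finset α → β}
    (hf : DeterminedBy A f) (e : α) : DeterminedBy A fun s => f (insert e s) :=
  fun _ _ hst => hf fun x hx => by simp [hst x hx]

theorem DeterminedBy.apply_insert {β : Type*} {A : Set α} {f : Finset α → β}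
    (hf : DeterminedBy A f) {e : α} (he : e ∉ A) (s : Finset α) : f (insert e s) = f s :=
  hf fun x hx => by simp [ne_of_mem_of_not_mem hx he]

theorem DeterminedBy.comp {β γ : Type*} {A : Set α} {f : Finset α → β}
    (hf : DeterminedBy A f) (g : β → γ) : DeterminedBy A fun s => g (f s) :=
  fun _ _ hst => congrArg g (hf hst)

theorem bernoulliExp_mul_of_disjoint (E : Finset α) (p : ℝ) {A B : Set α} (hAB : Disjoint A B)
    {f g : Finset α → ℝ} (hf : DeterminedBy A f) (hg : DeterminedBy B g) :
    bernoulliExp E p (fun s => f s * g s) = bernoulliExp E p f * bernoulliExp E p g := by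
  induction E using Finset.induction_on generalizing f g with
  | empty => simp [bernoulliExp_empty]
  | insert e E he ih =>
    simp only [bernoulliExp_insert he, ih hf hg, ih (hf.comp_insert e) (hg.comp_insert e)]
    by_cases heA : e ∈ A
    · simp only [hg.apply_insert (Set.disjoint_left.1 hAB heA)]
      ring
    · simp only [hf.apply_insert heA]
      ring

theorem bernoulliExp_prod_of_disjoint (E : Finset α) (p : ℝ) {I : Finset ι} {A : ι → Set α}
    (hA : (I : Set ι).PairwiseDisjoint A) {f : ι → Finset α → ℝ}
    (hf : ∀ i ∈ I, DeterminedBy (A i) (f i)) :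
    bernoulliExp E p (fun s => ∏ i ∈ I, f i s) = ∏ i ∈ I, bernoulliExp E p (f i) := by
  induction I using Finset.induction_on with
  | empty => simp [bernoulliExp_const]
  | insert i I hi ih =>
    rw [Finset.coe_insert, Set.pairwiseDisjoint_insert_of_notMem (mod_cast hi)] at hA
    rw [Finset.forall_mem_insert] at hf
    have hI : DeterminedBy (⋃ j ∈ I, A j) fun s => ∏ j ∈ I, f j s := fun s t hst =>
      Finset.prod_congr rfl fun j hj =>
        hf.2 j hj fun e he => hst e (Set.mem_iUnion₂.2 ⟨j, hj, he⟩)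
    simp only [Finset.prod_insert hi]
    rw [bernoulliExp_mul_of_disjoint E p (Set.disjoint_iUnion₂_right.2 hA.2) hf.1 hI,
      ih hA.1 hf.2]

theorem bernoulliProb_not (E : Finset α) (p : ℝ) (P : Finset α → Prop) :
    bernoulliProb E p (fun s => ¬P s) = 1 - bernoulliProb E p P := by
  rw [eq_sub_iff_add_eq, bernoulliProb, bernoulliProb, ← bernoulliExp_add]
  refine (bernoulliExp_congr fun s _ => ?_).trans (bernoulliExp_const E p 1)
  by_cases hP : P s <;> simp [hP]

theorem bernoulliProb_mono (h0 : 0 ≤ p) (h1 : p ≤ 1) {P Q : Finset α → Prop}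
    (h : ∀ s ⊆ E, P s → Q s) : bernoulliProb E p P ≤ bernoulliProb E p Q :=
  bernoulliExp_mono h0 h1 fun s hs => by
    by_cases hP : P s
    · simp [hP, h s hs hP]
    · simp only [hP, if_false]
      positivity

theorem bernoulliProb_or_le (E : Finset α) (h0 : 0 ≤ p) (h1 : p ≤ 1) (P Q : Finset α → Prop) :
    bernoulliProb E p (fun s => P s ∨ Q s) ≤ bernoulliProb E p P + bernoulliProb E p Q := by
  rw [bernoulliProb, bernoulliProb, bernoulliProb, ← bernoulliExp_add]
  refine bernoulliExp_mono h0 h1 fun s _ => ?_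
  by_cases hP : P s <;> by_cases hQ : Q s <;> simp [hP, hQ]

theorem bernoulliProb_exists_le_sum (E : Finset α) (h0 : 0 ≤ p) (h1 : p ≤ 1) (I : Finset ι)
    (P : ι → Finset α → Prop) :
    bernoulliProb E p (fun s => ∃ i ∈ I, P i s) ≤ ∑ i ∈ I, bernoulliProb E p (P i) := by
  simp only [bernoulliProb]
  rw [← bernoulliExp_sum]
  refine bernoulliExp_mono h0 h1 fun s _ => ?_
  have hnonneg : ∀ i ∈ I, (0 : ℝ) ≤ if P i s then 1 else 0 := fun i _ => by positivity
  split_ifs with h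
  · obtain ⟨i, hi, hPi⟩ := h
    exact (if_pos hPi).ge.trans (Finset.single_le_sum hnonneg hi)
  · exact Finset.sum_nonneg hnonneg

theorem bernoulliProb_forall_of_disjoint (E : Finset α) (p : ℝ) {I : Finset ι} {A : ι → Set α}
    (hA : (I : Set ι).PairwiseDisjoint A) {P : ι → Finset α → Prop}
    (hP : ∀ i ∈ I, DeterminedBy (A i) (P i)) :
    bernoulliProb E p (fun s => ∀ i ∈ I, P i s) = ∏ i ∈ I, bernoulliProb E p (P i) := by
  simp only [bernoulliProb]
  rw [← bernoulliExp_prod_of_disjoint E p hA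
    fun i hi => (hP i hi).comp fun q => if q then (1 : ℝ) else 0]
  refine bernoulliExp_congr fun s _ => ?_
  simp only [Finset.prod_ite_zero, Finset.prod_const_one]
  congr

theorem bernoulliProb_exists_of_disjoint (E : Finset α) (p : ℝ) {I : Finset ι} {A : ι → Set α}
    (hA : (I : Set ι).PairwiseDisjoint A) {P : ι → Finset α → Prop}
    (hP : ∀ i ∈ I, DeterminedBy (A i) (P i)) :
    bernoulliProb E p (fun s => ∃ i ∈ I, P i s) = 1 - ∏ i ∈ I, (1 - bernoulliProb E p (P i)) := by
  simp only [← bernoulliProb_not]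
  rw [← bernoulliProb_forall_of_disjoint E p hA fun i hi => (hP i hi).comp Not,
    ← bernoulliProb_not]
  simp

theorem bernoulliProb_and_of_disjoint (E : Finset α) (p : ℝ) {A B : Set α} (hAB : Disjoint A B)
    {P Q : Finset α → Prop} (hP : DeterminedBy A P) (hQ : DeterminedBy B Q) :
    bernoulliProb E p (fun s => P s ∧ Q s) = bernoulliProb E p P * bernoulliProb E p Q := by
  rw [bernoulliProb, bernoulliProb, bernoulliProb, ← bernoulliExp_mul_of_disjoint E p hAB
    (hP.comp fun q => if q then (1 : ℝ) else 0) (hQ.comp fun q => if q then (1 : ℝ) else 0)]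
  refine bernoulliExp_congr fun s _ => ?_
  by_cases hPs : P s <;> by_cases hQs : Q s <;> simp [hPs, hQs]

theorem determinedBy_mem (e : α) : DeterminedBy {e} (e ∈ ·) :=
  fun _ _ hst => propext (hst e rfl)

theorem bernoulliProb_mem {e : α} (he : e ∈ E) (p : ℝ) : bernoulliProb E p (e ∈ ·) = p := by
  have hne : bernoulliProb (E.erase e) p (e ∈ ·) = 0 :=
    (bernoulliExp_congr fun s hs => if_neg fun hes => Finset.notMem_erase e E (hs hes)).trans
      (bernoulliExp_const _ _ _)
  rw [bernoulliProb] at hne ⊢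
  rw [← Finset.insert_erase he, bernoulliExp_insert (Finset.notMem_erase e E), hne]
  simp [bernoulliExp_const]

theorem bernoulliProb_subset {Q : Finset α} (hQ : Q ⊆ E) (p : ℝ) :
    bernoulliProb E p (Q ⊆ ·) = p ^ Q.card := by
  have hdisj : (Q : Set α).PairwiseDisjoint fun e => ({e} : Set α) :=
    fun a _ b _ hab => by simpa using hab
  simp only [Finset.subset_iff]
  rw [bernoulliProb_forall_of_disjoint E p hdisj fun e _ => determinedBy_mem e,
    Finset.prod_congr rfl fun e he => bernoulliProb_mem (hQ he) p, Finset.prod_const]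

theorem bernoulliProb_union_le {p₁ p₂ ρ : ℝ} (hp₁ : 0 ≤ p₁) (hp₁' : p₁ ≤ 1) (hp₂ : 0 ≤ p₂)
    (hp₂' : p₂ ≤ 1) (hp : 1 - p = (1 - p₁) * (1 - p₂)) {P X Y : Finset α → Prop}
    {Z : Finset α → Finset α → Prop}
    (hP : ∀ s t u, s ⊆ u → t ⊆ u → u ⊆ E → P u → X s ∨ Y u ∨ Z s t)
    (hZ : ∀ s ⊆ E, bernoulliProb E p₂ (Z s) ≤ ρ) :
    bernoulliProb E p P ≤ bernoulliProb E p₁ X + bernoulliProb E p Y + ρ := by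
  have hunion : ∀ s ⊆ E, bernoulliProb E p₂ (fun t => P (s ∪ t)) ≤
      (if X s then 1 else 0) + bernoulliProb E p₂ (fun t => Y (s ∪ t)) + ρ := fun s hs =>
    calc bernoulliProb E p₂ (fun t => P (s ∪ t))
        ≤ bernoulliProb E p₂ (fun t => X s ∨ Y (s ∪ t) ∨ Z s t) :=
          bernoulliProb_mono hp₂ hp₂' fun t ht => hP s t _ Finset.subset_union_left
            Finset.subset_union_right (Finset.union_subset hs ht)
      _ ≤ bernoulliProb E p₂ (fun _ => X s) +
            (bernoulliProb E p₂ (fun t => Y (s ∪ t)) + bernoulliProb E p₂ (Z s)) :=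
          (bernoulliProb_or_le E hp₂ hp₂' _ _).trans
            (add_le_add_right (bernoulliProb_or_le E hp₂ hp₂' _ _) _)
      _ ≤ _ := by
          rw [bernoulliProb, bernoulliExp_const]
          linarith [hZ s hs]
  calc bernoulliProb E p P
      = bernoulliExp E p₁ fun s => bernoulliProb E p₂ fun t => P (s ∪ t) :=
        bernoulliExp_sprinkle E hp _
    _ ≤ _ := bernoulliExp_mono hp₁ hp₁' hunion
    _ = _ := by
        rw [bernoulliExp_add, bernoulliExp_add, bernoulliExp_const, bernoulliProb.eq_def E p Y,
          bernoulliExp_sprinkle E hp, bernoulliProb.eq_def E p₁ X]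
        rfl

end RandomSubset

section BoundedDifferences

variable {α : Type*} {E : Finset α} {p : ℝ}

/-- Inserting one element into a finite set changes the value of `f` by at most `c`. -/
def HasBoundedDifferences (f : Finset α → ℝ) (c : ℝ) : Prop :=
  ∀ e s, |f (insert e s) - f s| ≤ c

theorem HasBoundedDifferences.of_forall_subset {f : Finset α → ℝ} {c : ℝ}
    (hf : ∀ e s t, s ⊆ t → (∀ e' ≠ e, e' ∈ t ↔ e' ∈ s) → |f t - f s| ≤ c) :
    HasBoundedDifferences f c := fun e s =>
  hf e s _ (Finset.subset_insert e s) fun e' he' => by simp [he']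

theorem HasBoundedDifferences.const_mul {f : Finset α → ℝ} {c : ℝ}
    (hf : HasBoundedDifferences f c) (l : ℝ) :
    HasBoundedDifferences (fun s => l * f s) (|l| * c) := fun e s => by
  rw [← mul_sub, abs_mul]
  exact mul_le_mul_of_nonneg_left (hf e s) (abs_nonneg l)

theorem HasBoundedDifferences.neg {f : Finset α → ℝ} {c : ℝ}
    (hf : HasBoundedDifferences f c) : HasBoundedDifferences (fun s => -f s) c := by
  simpa using hf.const_mul (-1)

theorem HasBoundedDifferences.comp_insert {f : Finset α → ℝ} {c : ℝ}
    (hf : HasBoundedDifferences f c) (e : α) :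
    HasBoundedDifferences (fun s => f (insert e s)) c := fun e' s => by
  simpa only [Finset.insert_comm e] using hf e' (insert e s)

open ProbabilityTheory in
theorem weighted_exp_le_exp_mean_add_sq_div_eight {p : ℝ} (h0 : 0 ≤ p) (h1 : p ≤ 1) (x y : ℝ) :
    p * Real.exp x + (1 - p) * Real.exp y ≤
      Real.exp (p * x + (1 - p) * y + (x - y) ^ 2 / 8) := by
  let μ := bernoulliMeasure x y ⟨p, h0, h1⟩
  have hsupp : ∀ᵐ u ∂μ, u ∈ Set.Icc (min x y) (max x y) := by
    have hmem : ({x, y} : Set ℝ) ∈ MeasureTheory.ae μ := by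
      rw [MeasureTheory.mem_ae_iff]
      simp [μ, bernoulliMeasure_def]
    filter_upwards [hmem] with u hu
    rcases hu with rfl | rfl <;> simp
  have hmgf := (hasSubgaussianMGF_of_mem_Icc measurable_id.aemeasurable hsupp).mgf_le 1
  simp only [mgf, μ, integral_bernoulliMeasure, id_eq, one_mul, smul_eq_mul] at hmgf
  set m := p * x + (1 - p) * y
  have hwidth : Real.exp (((‖max x y - min x y‖₊ / 2) ^ 2 : NNReal) * 1 ^ 2 / 2) =
      Real.exp ((x - y) ^ 2 / 8) := by
    push_cast
    rw [max_sub_min_eq_abs, norm_abs_eq_norm, Real.norm_eq_abs, div_pow, sq_abs]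
    ring_nf
  calc p * Real.exp x + (1 - p) * Real.exp y
      = Real.exp m * (p * Real.exp (x - m) + (1 - p) * Real.exp (y - m)) := by
        simp only [Real.exp_sub]
        field_simp
    _ ≤ Real.exp m * Real.exp ((x - y) ^ 2 / 8) := by
        rw [← hwidth]
        exact mul_le_mul_of_nonneg_left hmgf (Real.exp_pos m).le
    _ = _ := (Real.exp_add _ _).symm

theorem HasBoundedDifferences.abs_bernoulliExp_insert_sub_le (E : Finset α) (h0 : 0 ≤ p)
    (h1 : p ≤ 1) {f : Finset α → ℝ} {c : ℝ} (hf : HasBoundedDifferences f c) (e : α) :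
    |bernoulliExp E p (fun s => f (insert e s)) - bernoulliExp E p f| ≤ c := by
  have hle : ∀ {g h : Finset α → ℝ}, (∀ s, g s ≤ c + h s) →
      bernoulliExp E p g ≤ c + bernoulliExp E p h := fun hgh => by
    simpa only [bernoulliExp_add, bernoulliExp_const] using
      bernoulliExp_mono (E := E) h0 h1 fun s _ => hgh s
  rw [abs_sub_le_iff, sub_le_iff_le_add, sub_le_iff_le_add]
  refine ⟨hle fun s => ?_, hle fun s => ?_⟩
  · linarith [(abs_sub_le_iff.1 (hf e s)).1]
  · linarith [(abs_sub_le_iff.1 (hf e s)).2]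

theorem HasBoundedDifferences.bernoulliExp_exp_le (E : Finset α) (h0 : 0 ≤ p) (h1 : p ≤ 1)
    {f : Finset α → ℝ} {c : ℝ} (hf : HasBoundedDifferences f c) :
    bernoulliExp E p (fun s => Real.exp (f s)) ≤
      Real.exp (bernoulliExp E p f + E.card * c ^ 2 / 8) := by
  induction E using Finset.induction_on generalizing f with
  | empty => simp [bernoulliExp_empty]
  | insert e E he ih =>
    rw [bernoulliExp_insert he, bernoulliExp_insert he, Finset.card_insert_of_notMem he]
    set x := bernoulliExp E p fun s => f (insert e s)
    set y := bernoulliExp E p f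
    have hxy : (x - y) ^ 2 ≤ c ^ 2 :=
      sq_le_sq.2 ((hf.abs_bernoulliExp_insert_sub_le E h0 h1 e).trans (le_abs_self c))
    calc p * bernoulliExp E p (fun s => Real.exp (f (insert e s))) +
          (1 - p) * bernoulliExp E p (fun s => Real.exp (f s))
        ≤ p * Real.exp (x + E.card * c ^ 2 / 8) + (1 - p) * Real.exp (y + E.card * c ^ 2 / 8) :=
          add_le_add (mul_le_mul_of_nonneg_left (ih (hf.comp_insert e)) h0)
            (mul_le_mul_of_nonneg_left (ih hf) (sub_nonneg.2 h1))
      _ ≤ _ := weighted_exp_le_exp_mean_add_sq_div_eight h0 h1 _ _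
      _ ≤ _ := Real.exp_le_exp.2 (by push_cast; linarith)

theorem HasBoundedDifferences.bernoulliProb_add_le_le {E : Finset α} (h0 : 0 ≤ p) (h1 : p ≤ 1)
    {f : Finset α → ℝ} {c D a : ℝ} (hf : HasBoundedDifferences f c) (hD : E.card * c ^ 2 ≤ D)
    (ha : 0 ≤ a) :
    bernoulliProb E p (fun s => bernoulliExp E p f + a ≤ f s) ≤ Real.exp (-2 * a ^ 2 / D) := by
  have hD0 : 0 ≤ D := le_trans (by positivity) hD
  set m := bernoulliExp E p f
  -- This choice minimises `D * l ^ 2 / 8 - l * a`.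
  set l := 4 * a / D
  have hl : 0 ≤ l := by positivity
  calc bernoulliProb E p (fun s => m + a ≤ f s)
      ≤ bernoulliExp E p fun s => Real.exp (-(l * (m + a))) * Real.exp (l * f s) := by
        refine bernoulliExp_mono h0 h1 fun s _ => ?_
        rw [← Real.exp_add]
        split_ifs with hs
        · exact Real.one_le_exp (by nlinarith)
        · positivity
    _ ≤ Real.exp (-(l * (m + a))) * Real.exp (l * m + E.card * (|l| * c) ^ 2 / 8) := by
        have hexp := (hf.const_mul l).bernoulliExp_exp_le E h0 h1
        rw [bernoulliExp_const_mul] at hexp ⊢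
        gcongr
    _ = Real.exp (E.card * c ^ 2 * l ^ 2 / 8 - l * a) := by
        rw [← Real.exp_add, mul_pow, sq_abs]
        ring_nf
    _ ≤ Real.exp (D * l ^ 2 / 8 - l * a) := by gcongr
    _ = Real.exp (-2 * a ^ 2 / D) := by
        rcases eq_or_ne D 0 with hD | _
        · simp [l, hD]
        · simp only [l]
          field_simp
          ring_nf

theorem HasBoundedDifferences.bernoulliProb_le_sub_le {E : Finset α} (h0 : 0 ≤ p) (h1 : p ≤ 1)
    {f : Finset α → ℝ} {c D a : ℝ} (hf : HasBoundedDifferences f c) (hD : E.card * c ^ 2 ≤ D)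
    (ha : 0 ≤ a) :
    bernoulliProb E p (fun s => f s ≤ bernoulliExp E p f - a) ≤ Real.exp (-2 * a ^ 2 / D) := by
  refine le_trans (le_of_eq ?_) (hf.neg.bernoulliProb_add_le_le h0 h1 hD ha)
  congr! 2 with s
  rw [bernoulliExp_neg, neg_add_eq_sub, ← neg_sub (bernoulliExp E p f), neg_le_neg_iff]

end BoundedDifferences

section TreeSurvival

/-- The probability that at least one of `m` independent events of probability `x` occurs. -/
def unionProb (m : ℕ) (x : ℝ) : ℝ := 1 - (1 - x) ^ m

theorem unionProb_eq_mul_sum (m : ℕ) (x : ℝ) :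
    unionProb m x = x * ∑ i ∈ Finset.range m, (1 - x) ^ i := by
  rw [unionProb]
  linear_combination geom_sum_mul (1 - x) m

theorem unionProb_mem_Icc (m : ℕ) {x : ℝ} (hx : x ∈ Set.Icc (0 : ℝ) 1) :
    unionProb m x ∈ Set.Icc (0 : ℝ) 1 := by
  have h0 : 0 ≤ 1 - x := sub_nonneg.2 hx.2
  have h1 := pow_le_one₀ (n := m) h0 (sub_le_self 1 hx.1)
  exact ⟨sub_nonneg.2 h1, sub_le_self 1 (pow_nonneg h0 m)⟩

theorem unionProb_le_unionProb (m : ℕ) {x y : ℝ} (hxy : x ≤ y) (hy : y ≤ 1) :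
    unionProb m x ≤ unionProb m y :=
  sub_le_sub_left (pow_le_pow_left₀ (by linarith) (by linarith) m) 1

theorem le_unionProb {m : ℕ} (hm : m ≠ 0) {x : ℝ} (hx : x ∈ Set.Icc (0 : ℝ) 1) :
    x ≤ unionProb m x := by
  have := pow_le_of_le_one (sub_nonneg.2 hx.2) (sub_le_self 1 hx.1) hm
  rw [unionProb]
  linarith

theorem unionProb_sub_le (m : ℕ) {x y : ℝ} (hx : 0 ≤ x) (hxy : x ≤ y) (hy : y ≤ 1) :
    unionProb m y - unionProb m x ≤ m * (y - x) := by
  have h := (le_abs_self _).trans (abs_pow_sub_pow_le (1 - x) (1 - y) m)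
  have hmax : max |1 - x| |1 - y| ^ (m - 1) ≤ 1 := by
    refine pow_le_one₀ (by positivity) (max_le ?_ ?_) <;> rw [abs_le] <;> constructor <;> linarith
  rw [sub_sub_sub_cancel_left, abs_of_nonneg (sub_nonneg.2 hxy)] at h
  calc unionProb m y - unionProb m x
      = (1 - x) ^ m - (1 - y) ^ m := sub_sub_sub_cancel_left _ _ _
    _ ≤ (y - x) * m * 1 :=
      h.trans (mul_le_mul_of_nonneg_left hmax (mul_nonneg (sub_nonneg.2 hxy) m.cast_nonneg))
    _ = m * (y - x) := by ring

theorem unionProb_le_mul (m : ℕ) {x : ℝ} (hx : x ∈ Set.Icc (0 : ℝ) 1) :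
    unionProb m x ≤ m * x := by
  simpa [unionProb] using unionProb_sub_le m le_rfl hx.1 hx.2

/-- Quantitative strict concavity of `unionProb m` at the origin. -/
theorem mul_mul_sub_le_mul_unionProb_sub {m : ℕ} (hm : 2 ≤ m) {x y : ℝ} (hy : 0 ≤ y)
    (hyx : y ≤ x) (hx : x ≤ 1) :
    x * y * (x - y) ≤ x * unionProb m y - y * unionProb m x := by
  have hterm : ∀ i ∈ Finset.range m, 0 ≤ (1 - y) ^ i - (1 - x) ^ i := fun i _ =>
    sub_nonneg.2 (pow_le_pow_left₀ (by linarith) (by linarith) i)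
  have hsum := Finset.single_le_sum hterm (Finset.mem_range.2 hm)
  rw [Finset.sum_sub_distrib] at hsum
  have := mul_le_mul_of_nonneg_left hsum (mul_nonneg (hy.trans hyx) hy)
  rw [unionProb_eq_mul_sum, unionProb_eq_mul_sum]
  linarith

/-- The probability that bond percolation on the rooted `m`-ary tree has an open path of length
`k` starting at the root. -/
def treeSurv (m : ℕ) (p : ℝ) : ℕ → ℝ
  | 0 => 1
  | k + 1 => unionProb m (p * treeSurv m p k)

/-- The probability that bond percolation on the rooted tree whose root has `d` children and all
of whose other vertices have `d - 1` children has an open path of length `k + 1` starting at the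
root. -/
def rootSurv (d : ℕ) (p : ℝ) (k : ℕ) : ℝ := unionProb d (p * treeSurv (d - 1) p k)

variable {m : ℕ} {p σ t : ℝ}

theorem treeSurv_mem_Icc (m : ℕ) (hp : p ∈ Set.Icc (0 : ℝ) 1) (k : ℕ) :
    treeSurv m p k ∈ Set.Icc (0 : ℝ) 1 := by
  induction k with
  | zero => simp [treeSurv]
  | succ k ih => exact unionProb_mem_Icc m (unitInterval.mul_mem hp ih)

theorem exists_treeSurv_lower_bound (h0 : 0 < p) (h1 : p ≤ 1) (hmp : 1 < m * p) :
    ∃ σ > 0, ∀ k, σ ≤ treeSurv m p k := by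
  have hlim : ∀ᶠ x : ℝ in nhds 0, 1 < p * ∑ i ∈ Finset.range m, (1 - p * x) ^ i := by
    refine (Continuous.tendsto (by fun_prop) 0).eventually (lt_mem_nhds ?_)
    simpa [mul_comm] using hmp
  obtain ⟨σ, hσ, hσ0, hσ1⟩ :=
    ((hlim.filter_mono nhdsWithin_le_nhds).and (Ioc_mem_nhdsGT (one_pos (α := ℝ)))).exists
  refine ⟨σ, hσ0, fun k => ?_⟩
  induction k with
  | zero => exact hσ1
  | succ k ih =>
    have hk := treeSurv_mem_Icc m ⟨h0.le, h1⟩ k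
    calc σ ≤ unionProb m (p * σ) := by
          rw [unionProb_eq_mul_sum]
          nlinarith
      _ ≤ treeSurv m p (k + 1) :=
          unionProb_le_unionProb m (mul_le_mul_of_nonneg_left ih h0.le)
            (mul_le_one₀ h1 hk.1 hk.2)

/-- By strict concavity of `unionProb`, a factor `t` lost at one level of the tree is more than
recovered at the next one, which leaves room for the factor `r` in the edge probability. -/
theorem mul_treeSurv_le {r : ℝ} (hm : 2 ≤ m) (h0 : 0 < p) (h1 : p ≤ 1) (hσ0 : 0 < σ)
    (hσ : ∀ k, σ ≤ treeSurv m p k) (ht0 : 0 < t) (ht1 : t ≤ 1) (hr0 : 0 < r) (hr1 : r ≤ 1)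
    (hr : (1 - r) * m ≤ r * (p * σ * (1 - t))) (k : ℕ) :
    t * treeSurv m p k ≤ treeSurv m (r * p) k := by
  induction k with
  | zero => simpa [treeSurv] using ht1
  | succ k ih =>
    have hk := treeSurv_mem_Icc m ⟨h0.le, h1⟩ k
    have hrp : r * p ∈ Set.Icc (0 : ℝ) 1 := ⟨by positivity, mul_le_one₀ hr1 h0.le h1⟩
    have hrpk := unitInterval.mul_mem hrp (treeSurv_mem_Icc m hrp k)
    have hx := unitInterval.mul_mem ⟨h0.le, h1⟩ hk
    have hxσ : p * σ ≤ p * treeSurv m p k := mul_le_mul_of_nonneg_left (hσ k) h0.le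
    have hyz : r * t * (p * treeSurv m p k) ≤ r * p * treeSurv m (r * p) k := by
      have := mul_le_mul_of_nonneg_left ih hrp.1
      linarith
    change t * unionProb m (p * treeSurv m p k) ≤ unionProb m (r * p * treeSurv m (r * p) k)
    refine le_trans ?_ (unionProb_le_unionProb m hyz hrpk.2)
    set x := p * treeSurv m p k
    have hxpos : 0 < x := (mul_pos h0 hσ0).trans_le hxσ
    have hrt : r * t ≤ 1 := mul_le_one₀ hr1 ht0.le ht1
    have hconcave := mul_mul_sub_le_mul_unionProb_sub hm (y := r * t * x) (by positivity)
      (mul_le_of_le_one_left hx.1 hrt) hx.2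
    have hgain : (1 - r) * unionProb m x ≤ r * x * (x - r * t * x) :=
      calc (1 - r) * unionProb m x ≤ (1 - r) * (m * x) :=
            mul_le_mul_of_nonneg_left (unionProb_le_mul m hx) (sub_nonneg.2 hr1)
        _ ≤ r * (p * σ * (1 - t)) * x := by
            rw [← mul_assoc]
            exact mul_le_mul_of_nonneg_right hr hx.1
        _ ≤ r * (x * (1 - r * t)) * x := by
            gcongr
            exact mul_le_of_le_one_left ht0.le hr1
        _ = r * x * (x - r * t * x) := by ring
    refine le_of_mul_le_mul_left ?_ hxpos
    have := mul_le_mul_of_nonneg_left hgain (mul_nonneg ht0.le hxpos.le)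
    linarith

theorem exists_mul_treeSurv_le (hm : 2 ≤ m) (h0 : 0 < p) (h1 : p ≤ 1) (hσ0 : 0 < σ)
    (hσ : ∀ k, σ ≤ treeSurv m p k) (ht0 : 0 < t) (ht1 : t < 1) :
    ∃ r, t ≤ r ∧ r < 1 ∧ ∀ k, t * treeSurv m p k ≤ treeSurv m (r * p) k := by
  have hm' : (2 : ℝ) ≤ m := mod_cast hm
  have hgain : 0 < p * σ * (1 - t) := by have := sub_pos.2 ht1; positivity
  have hσ1 : p * σ ≤ 1 := mul_le_one₀ h1 hσ0.le (hσ 0)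
  have hr1 : m / (m + p * σ * (1 - t)) < 1 := (div_lt_one (by positivity)).2 (by linarith)
  refine ⟨m / (m + p * σ * (1 - t)), ?_, hr1, mul_treeSurv_le hm h0 h1 hσ0 hσ ht0 ht1.le
    (by positivity) hr1.le (le_of_eq ?_)⟩
  · rw [le_div_iff₀ (by positivity)]
    nlinarith
  · field_simp
    ring

/-- Left continuity in `p` of the survival probability, uniformly in the depth. -/
theorem exists_rootSurv_le_add {d : ℕ} (hd : 3 ≤ d) (h0 : 0 < p) (h1 : p ≤ 1)
    (hdp : 1 < (d - 1 : ℕ) * p) :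
    ∃ w > 0, ∀ ε > 0, ∃ p₁ > 0, p₁ < p ∧
      ∀ k, w ≤ rootSurv d p₁ k ∧ rootSurv d p k ≤ rootSurv d p₁ k + ε := by
  obtain ⟨σ, hσ0, hσ⟩ := exists_treeSurv_lower_bound h0 h1 hdp
  refine ⟨p * σ / 4, by positivity, fun ε hε => ?_⟩
  have hd0 : (0 : ℝ) < d := by positivity
  obtain ⟨u, hu0, hu⟩ : ∃ u : ℝ, 0 < u ∧ u < min (1 / 2) (ε / (2 * d)) :=
    exists_between (by positivity)
  obtain ⟨hu_half, hu_eps⟩ := lt_min_iff.1 hu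
  rw [lt_div_iff₀ (by positivity)] at hu_eps
  obtain ⟨r, htr, hr1, hr⟩ :=
    exists_mul_treeSurv_le (by omega) h0 h1 hσ0 hσ (t := 1 - u) (by linarith) (by linarith)
  have hr0 : 0 < r := by linarith
  refine ⟨r * p, by positivity, mul_lt_of_lt_one_left h0 hr1, fun k => ?_⟩
  have hrp : r * p ∈ Set.Icc (0 : ℝ) 1 := ⟨by positivity, mul_le_one₀ hr1.le h0.le h1⟩
  have hx := unitInterval.mul_mem ⟨h0.le, h1⟩ (treeSurv_mem_Icc (d - 1) ⟨h0.le, h1⟩ k)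
  have hy := unitInterval.mul_mem hrp (treeSurv_mem_Icc (d - 1) hrp k)
  have hyx : (1 - u) ^ 2 * (p * treeSurv (d - 1) p k) ≤ r * p * treeSurv (d - 1) (r * p) k :=
    calc _ = (1 - u) * p * ((1 - u) * treeSurv (d - 1) p k) := by ring
      _ ≤ _ := mul_le_mul (mul_le_mul_of_nonneg_right htr h0.le) (hr k)
        (mul_nonneg (by linarith) (hσ0.le.trans (hσ k))) hrp.1
  have hxσ : p * σ ≤ p * treeSurv (d - 1) p k := mul_le_mul_of_nonneg_left (hσ k) h0.le
  set x := p * treeSurv (d - 1) p k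
  constructor
  · have hu_sq : 1 / 4 ≤ (1 - u) ^ 2 := by nlinarith
    calc p * σ / 4 = 1 / 4 * (p * σ) := by ring
      _ ≤ (1 - u) ^ 2 * x := mul_le_mul hu_sq hxσ (by positivity) (sq_nonneg _)
      _ ≤ _ := hyx.trans (le_unionProb (by omega) hy)
  · have hx' : (1 - u) ^ 2 * x ≤ x := mul_le_of_le_one_left hx.1 (by nlinarith)
    calc unionProb d x
        ≤ unionProb d ((1 - u) ^ 2 * x) + d * (x - (1 - u) ^ 2 * x) :=
          sub_le_iff_le_add'.1 (unionProb_sub_le d (mul_nonneg (sq_nonneg _) hx.1) hx' hx.2)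
      _ ≤ unionProb d (r * p * treeSurv (d - 1) (r * p) k) + ε := by
          refine add_le_add (unionProb_le_unionProb d hyx hy.2) ?_
          have : x - (1 - u) ^ 2 * x ≤ 2 * u := by nlinarith [mul_nonneg hu0.le hx.1, hx.2]
          linarith [mul_le_mul_of_nonneg_left this hd0.le]

end TreeSurvival

section Balls

variable {α : Type*} [Fintype α] {G H : SimpleGraph α} {d j k : ℕ} {A : Finset α} {v w x : α}

/-- The closed ball of radius `k` around `v` in the graph metric of `H`. -/
def closedBall (H : SimpleGraph α) (k : ℕ) (v : α) : Finset α :=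
  Finset.univ.filter fun w => H.edist v w ≤ k

/-- The set of vertices within distance `k` of `A` in the graph metric of `H`. -/
def nbhd (H : SimpleGraph α) (k : ℕ) (A : Finset α) : Finset α :=
  Finset.univ.filter fun w => ∃ v ∈ A, w ∈ closedBall H k v

theorem mem_closedBall : w ∈ closedBall H k v ↔ H.edist v w ≤ k := by simp [closedBall]

theorem mem_nbhd : w ∈ nbhd H k A ↔ ∃ v ∈ A, w ∈ closedBall H k v := by simp [nbhd]

theorem mem_closedBall_iff_exists_walk :
    w ∈ closedBall H k v ↔ ∃ q : H.Walk v w, q.length ≤ k := by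
  rw [mem_closedBall]
  refine ⟨fun h => ?_, fun ⟨q, hq⟩ => (H.edist_le q).trans (mod_cast hq)⟩
  obtain ⟨q, hq⟩ := H.exists_walk_of_edist_ne_top (ne_top_of_le_ne_top (ENat.natCast_ne_top k) h)
  exact ⟨q, mod_cast hq.trans_le h⟩

theorem mem_closedBall_self (H : SimpleGraph α) (k : ℕ) (v : α) : v ∈ closedBall H k v := by
  simp [mem_closedBall]

theorem mem_closedBall_comm : w ∈ closedBall H k v ↔ v ∈ closedBall H k w := by
  rw [mem_closedBall, mem_closedBall, H.edist_comm]

theorem mem_closedBall_trans (hvw : w ∈ closedBall H j v) (hwx : x ∈ closedBall H k w) :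
    x ∈ closedBall H (j + k) v := by
  rw [mem_closedBall] at *
  push_cast
  exact H.edist_triangle.trans (add_le_add hvw hwx)

theorem closedBall_mono_graph (h : H ≤ G) (k : ℕ) (v : α) :
    closedBall H k v ⊆ closedBall G k v := fun _ hw =>
  mem_closedBall.2 ((SimpleGraph.edist_anti h).trans (mem_closedBall.1 hw))

theorem reachable_of_mem_closedBall (h : w ∈ closedBall H k v) : H.Reachable v w :=
  let ⟨q, _⟩ := mem_closedBall_iff_exists_walk.1 h
  q.reachable

theorem mem_closedBall_of_mem_support (q : H.Walk v w) (hq : q.length ≤ k) (hx : x ∈ q.support) :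
    x ∈ closedBall H k v :=
  mem_closedBall_iff_exists_walk.2 ⟨q.takeUntil x hx, (q.length_takeUntil_le_length hx).trans hq⟩

theorem subset_nbhd (H : SimpleGraph α) (k : ℕ) (A : Finset α) : A ⊆ nbhd H k A :=
  fun v hv => mem_nbhd.2 ⟨v, hv, mem_closedBall_self H k v⟩

theorem mem_nbhd_succ_of_adj (hv : v ∈ nbhd H k A) (h : H.Adj v w) : w ∈ nbhd H (k + 1) A := by
  obtain ⟨a, ha, hva⟩ := mem_nbhd.1 hv
  exact mem_nbhd.2 ⟨a, ha, mem_closedBall_trans hva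
    (mem_closedBall_iff_exists_walk.2 ⟨h.toWalk, by simp⟩)⟩

theorem nbhd_subset_nbhd_succ (H : SimpleGraph α) (k : ℕ) (A : Finset α) :
    nbhd H k A ⊆ nbhd H (k + 1) A := fun _ hw => by
  obtain ⟨a, ha, hwa⟩ := mem_nbhd.1 hw
  exact mem_nbhd.2 ⟨a, ha, mem_closedBall_trans hwa (mem_closedBall_self H 1 _)⟩

theorem card_filter_adj (G : SimpleGraph α) (v : α) :
    (Finset.univ.filter (G.Adj v)).card = (G.neighborSet v).ncard := by
  rw [Set.ncard_eq_toFinset_card']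
  congr 1
  ext w
  simp

theorem card_closedBall_le (hd : ∀ v, (G.neighborSet v).ncard ≤ d) (k : ℕ) (v : α) :
    (closedBall G k v).card ≤ (d + 1) ^ k := by
  induction k generalizing v with
  | zero =>
    refine Finset.card_le_one.2 fun a ha b hb => ?_
    rw [mem_closedBall, Nat.cast_zero, nonpos_iff_eq_zero, SimpleGraph.edist_eq_zero_iff] at ha hb
    exact ha.symm.trans hb
  | succ k ih =>
    have hsub : closedBall G (k + 1) v ⊆
        (insert v (Finset.univ.filter (G.Adj v))).biUnion (closedBall G k) := fun w hw => by
      obtain ⟨q, hq⟩ := mem_closedBall_iff_exists_walk.1 hw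
      cases q with
      | nil => exact Finset.mem_biUnion.2 ⟨v, by simp, mem_closedBall_self G k v⟩
      | cons h q =>
        exact Finset.mem_biUnion.2 ⟨_, by simp [h],
          mem_closedBall_iff_exists_walk.2 ⟨q, by simpa using hq⟩⟩
    calc (closedBall G (k + 1) v).card
        ≤ (insert v (Finset.univ.filter (G.Adj v))).card * (d + 1) ^ k :=
          (Finset.card_le_card hsub).trans (Finset.card_biUnion_le_card_mul _ _ _ fun w _ => ih w)
      _ ≤ (d + 1) * (d + 1) ^ k := by
          refine Nat.mul_le_mul_right _ ((Finset.card_insert_le _ _).trans ?_)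
          rw [card_filter_adj]
          exact Nat.succ_le_succ (hd v)
      _ = (d + 1) ^ (k + 1) := (pow_succ' _ _).symm

theorem card_nbhd_le (hd : ∀ v, (G.neighborSet v).ncard ≤ d) (k : ℕ) (A : Finset α) :
    (nbhd G k A).card ≤ A.card * (d + 1) ^ k := by
  have hsub : nbhd G k A ⊆ A.biUnion (closedBall G k) := fun w hw =>
    Finset.mem_biUnion.2 (mem_nbhd.1 hw)
  exact (Finset.card_le_card hsub).trans
    (Finset.card_biUnion_le_card_mul _ _ _ fun v _ => card_closedBall_le hd k v)

end Balls

section EdgeCounts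

variable {W : Type} [Fintype W] {G : SimpleGraph W} {d : ℕ}

theorem mem_edgeFinset' {e : Sym2 W} : e ∈ edgeFinset' G ↔ e ∈ G.edgeSet := by
  simp [edgeFinset']

/-- The edges of `G` with at least one end in `S`. -/
def incidentEdges (G : SimpleGraph W) (S : Finset W) : Finset (Sym2 W) :=
  (edgeFinset' G).filter fun e => ∃ v ∈ S, v ∈ e

theorem mem_incidentEdges {S : Finset W} {e : Sym2 W} :
    e ∈ incidentEdges G S ↔ e ∈ edgeFinset' G ∧ ∃ v ∈ S, v ∈ e := by
  simp [incidentEdges]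

theorem card_incidentEdges_le (hd : ∀ v, (G.neighborSet v).ncard ≤ d) (S : Finset W) :
    (incidentEdges G S).card ≤ S.card * d := by
  have hsub : incidentEdges G S ⊆ S.biUnion fun v => G.incidenceFinset v := fun e he => by
    obtain ⟨he, v, hv, hve⟩ := mem_incidentEdges.1 he
    exact Finset.mem_biUnion.2 ⟨v, hv, (G.mem_incidenceFinset v e).2 ⟨mem_edgeFinset'.1 he, hve⟩⟩
  refine (Finset.card_le_card hsub).trans (Finset.card_biUnion_le_card_mul _ _ _ fun v _ => ?_)
  rw [G.card_incidenceFinset_eq_degree, ← G.card_neighborFinset_eq_degree,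
    SimpleGraph.neighborFinset_def, ← Set.ncard_eq_toFinset_card']
  exact hd v

theorem card_edgeFinset'_le (hd : ∀ v, (G.neighborSet v).ncard ≤ d) :
    (edgeFinset' G).card ≤ Fintype.card W * d := by
  refine (Finset.card_le_card fun e he => mem_incidentEdges.2 ⟨he, ?_⟩).trans
    (card_incidentEdges_le hd Finset.univ)
  exact ⟨e.out.1, Finset.mem_univ _, e.out_fst_mem⟩

end EdgeCounts

section NonBacktracking

variable {α : Type*} {G H : SimpleGraph α} {u v w x y : α}

/-- A walk is non-backtracking if it never traverses the same edge twice in a row. -/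
def IsNonBacktracking (q : H.Walk v w) : Prop := q.edges.IsChain (· ≠ ·)

theorem isNonBacktracking_cons_nil (h : H.Adj u v) :
    IsNonBacktracking (.cons h .nil : H.Walk u v) := by
  simp [IsNonBacktracking]

theorem isNonBacktracking_cons_cons (h : H.Adj u v) (h' : H.Adj v w) (q : H.Walk w x) :
    IsNonBacktracking (.cons h (.cons h' q)) ↔ w ≠ u ∧ IsNonBacktracking (.cons h' q) := by
  have hne : s(u, v) ≠ s(v, w) ↔ w ≠ u := by
    rw [Sym2.eq_swap, Ne, Sym2.congr_right, eq_comm]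
  simp only [IsNonBacktracking, SimpleGraph.Walk.edges_cons, List.isChain_cons_cons, hne]

theorem isAcyclic_fromEdgeSet {F : Finset (Sym2 α)} (hF : ↑F ⊆ G.edgeSet)
    (hg : F.card < G.egirth) : (SimpleGraph.fromEdgeSet (F : Set (Sym2 α))).IsAcyclic := by
  intro a c hc
  have hle : SimpleGraph.fromEdgeSet (F : Set (Sym2 α)) ≤ G := by
    rw [← SimpleGraph.edgeSet_subset_edgeSet, SimpleGraph.edgeSet_fromEdgeSet]
    exact Set.sdiff_subset.trans hF
  have hcF : c.edges.toFinset ⊆ F := fun e he => by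
    have := c.edges_subset_edgeSet (List.mem_toFinset.1 he)
    rw [SimpleGraph.edgeSet_fromEdgeSet] at this
    exact this.1
  have hlen : c.length ≤ F.card := by
    rw [← c.length_edges, ← List.toFinset_card_of_nodup hc.edges_nodup]
    exact Finset.card_le_card hcF
  refine absurd hg (not_lt.2 ((SimpleGraph.egirth_anti hle).trans
    ((SimpleGraph.egirth_le_length hc).trans ?_)))
  exact_mod_cast hlen

theorem exists_isAcyclic_transfer {L : List (Sym2 α)} (hL : ∀ e ∈ L, e ∈ G.edgeSet)
    (hg : L.length < G.egirth) : ∃ T : SimpleGraph α, T.IsAcyclic ∧ ∀ e ∈ L, e ∈ T.edgeSet := by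
  refine ⟨_, isAcyclic_fromEdgeSet (F := L.toFinset) (fun e he => hL e (by simpa using he))
    (lt_of_le_of_lt (mod_cast L.toFinset_card_le) hg), fun e he => ?_⟩
  rw [SimpleGraph.edgeSet_fromEdgeSet]
  exact ⟨by simpa using he, G.not_isDiag_of_mem_edgeSet (hL e he)⟩

theorem IsNonBacktracking.isPath_transfer {q : G.Walk v w} (hq : IsNonBacktracking q)
    (hH : H.IsAcyclic) (hqH : ∀ e ∈ q.edges, e ∈ H.edgeSet) : (q.transfer H hqH).IsPath := by
  rw [hH.isPath_iff_isChain, SimpleGraph.Walk.edges_transfer]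
  exact hq

theorem IsNonBacktracking.isPath {q : G.Walk v w} (hq : IsNonBacktracking q)
    (hg : q.length < G.egirth) : q.IsPath := by
  obtain ⟨T, hT, hqT⟩ := exists_isAcyclic_transfer (fun _ h => q.edges_subset_edgeSet h)
    (q.length_edges ▸ hg)
  have := (hq.isPath_transfer hT hqT).support_nodup
  rw [SimpleGraph.Walk.support_transfer] at this
  exact .mk' this

theorem support_eq_of_isAcyclic (hH : H.IsAcyclic) {q : H.Walk v x} {q' : H.Walk v y}
    (hq : q.IsPath) (hq' : q'.IsPath) {e : Sym2 α} (he : e ∈ q.edges) (hx : x ∈ e)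
    (he' : e ∈ q'.edges) (hy : y ∈ e) : q.support = q'.support := by
  have unique : ∀ {z} {r r' : H.Walk v z}, r.IsPath → r'.IsPath → r = r' := fun hr hr' =>
    congrArg Subtype.val ((hH.subsingleton_path _ _).elim ⟨_, hr⟩ ⟨_, hr'⟩)
  rcases eq_or_ne x y with rfl | hxy
  · rw [unique hq hq']
  -- Otherwise `e = s(x, y)` and each of the two paths is a proper initial part of the other.
  obtain rfl : e = s(x, y) := (Sym2.mem_and_mem_iff hxy).1 ⟨hx, hy⟩
  have hyq := q.snd_mem_support_of_mem_edges he
  have hxq' := q'.fst_mem_support_of_mem_edges he'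
  have hlt := SimpleGraph.Walk.length_takeUntil_lt_length hyq hxy.symm
  have hlt' := SimpleGraph.Walk.length_takeUntil_lt_length hxq' hxy
  rw [unique (hq.takeUntil hyq) hq'] at hlt
  rw [unique (hq'.takeUntil hxq') hq] at hlt'
  exact absurd hlt hlt'.le.not_gt

theorem IsNonBacktracking.support_eq {q : G.Walk v x} {q' : G.Walk v y}
    (hq : IsNonBacktracking q) (hq' : IsNonBacktracking q')
    (hg : (q.length + q'.length : ℕ) < G.egirth) {e : Sym2 α} (he : e ∈ q.edges) (hx : x ∈ e)
    (he' : e ∈ q'.edges) (hy : y ∈ e) : q.support = q'.support := by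
  obtain ⟨T, hT, hqT⟩ := exists_isAcyclic_transfer (G := G) (L := q.edges ++ q'.edges)
    (fun _ h => (List.mem_append.1 h).elim (fun h => q.edges_subset_edgeSet h)
      fun h => q'.edges_subset_edgeSet h)
    (by simpa using hg)
  have hqT' := fun e h => hqT e (List.mem_append_left _ h)
  have hqT'' := fun e h => hqT e (List.mem_append_right _ h)
  have := support_eq_of_isAcyclic hT (hq.isPath_transfer hT hqT') (hq'.isPath_transfer hT hqT'')
    (e := e) (by simpa using he) hx (by simpa using he') hy
  simpa only [SimpleGraph.Walk.support_transfer] using this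

end NonBacktracking

section Exploration

variable {α : Type*} {G : SimpleGraph α} {k : ℕ} {u v w : α} {s t : Finset (Sym2 α)}

/-- The graph whose edges are the open edges, i.e. those in `s`. -/
abbrev openGraph (s : Finset (Sym2 α)) : SimpleGraph α := SimpleGraph.fromEdgeSet ↑s

/-- The event that some non-backtracking walk of length `k + 1` in `G` which starts with the step
from `u` to `v` has only open edges. -/
def BranchSurvives (G : SimpleGraph α) : ℕ → α → α → Finset (Sym2 α) → Prop
  | 0, u, v, s => s(u, v) ∈ s
  | k + 1, u, v, s => s(u, v) ∈ s ∧ ∃ w, (G.Adj v w ∧ w ≠ u) ∧ BranchSurvives G k v w s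

/-- The event that some non-backtracking walk of length `k + 1` in `G` starting at `v` has only
open edges. -/
def Survives (G : SimpleGraph α) (k : ℕ) (v : α) (s : Finset (Sym2 α)) : Prop :=
  ∃ w, G.Adj v w ∧ BranchSurvives G k v w s

/-- The edges on the non-backtracking walks of length at most `k + 1` in `G` which start with the
step from `u` to `v`. -/
def branch (G : SimpleGraph α) : ℕ → α → α → Set (Sym2 α)
  | 0, u, v => {s(u, v)}
  | k + 1, u, v => insert s(u, v) {e | ∃ w, (G.Adj v w ∧ w ≠ u) ∧ e ∈ branch G k v w}

theorem determinedBy_branchSurvives (G : SimpleGraph α) (k : ℕ) (u v : α) :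
    DeterminedBy (branch G k u v) (BranchSurvives G k u v) := by
  induction k generalizing u v with
  | zero => exact determinedBy_mem _
  | succ k ih =>
    refine fun s t h => propext (and_congr (h _ (Set.mem_insert _ _)) (exists_congr fun w =>
      and_congr_right fun hw => iff_of_eq (ih v w fun e he => h e (Set.mem_insert_of_mem _ ?_))))
    exact ⟨w, hw, he⟩

theorem BranchSurvives.mem (h : BranchSurvives G k u v s) : s(u, v) ∈ s := by
  cases k with
  | zero => exact h
  | succ k => exact h.1

theorem BranchSurvives.mono (hst : s ⊆ t) (h : BranchSurvives G k u v s) :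
    BranchSurvives G k u v t := by
  induction k generalizing u v with
  | zero => exact hst h
  | succ k ih =>
    obtain ⟨huv, w, hw, hr⟩ := h
    exact ⟨hst huv, w, hw, ih hr⟩

theorem Survives.mono (hst : s ⊆ t) (h : Survives G k v s) : Survives G k v t := by
  obtain ⟨w, hvw, hw⟩ := h
  exact ⟨w, hvw, hw.mono hst⟩

theorem exists_walk_of_mem_branch (h : G.Adj u v) {e : Sym2 α} (he : e ∈ branch G k u v) :
    ∃ y, ∃ q : G.Walk v y, IsNonBacktracking (.cons h q) ∧ q.length ≤ k ∧
      e ∈ (SimpleGraph.Walk.cons h q).edges ∧ y ∈ e := by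
  induction k generalizing u v with
  | zero =>
    obtain rfl : e = s(u, v) := he
    exact ⟨v, .nil, isNonBacktracking_cons_nil h, by simp⟩
  | succ k ih =>
    rcases he with rfl | ⟨w, ⟨hvw, hwu⟩, he⟩
    · exact ⟨v, .nil, isNonBacktracking_cons_nil h, by simp⟩
    · obtain ⟨y, q, hq, hlen, heq, hy⟩ := ih hvw he
      exact ⟨y, .cons hvw q, (isNonBacktracking_cons_cons ..).2 ⟨hwu, hq⟩, by simpa using hlen,
        List.mem_cons_of_mem _ heq, hy⟩

theorem exists_walk_of_branchSurvives (h : G.Adj u v) (hs : BranchSurvives G k u v s) :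
    ∃ y, ∃ q : G.Walk v y, IsNonBacktracking (.cons h q) ∧ q.length = k ∧
      ∀ e ∈ (SimpleGraph.Walk.cons h q).edges, e ∈ s := by
  induction k generalizing u v with
  | zero => exact ⟨v, .nil, isNonBacktracking_cons_nil h, rfl, by simpa using hs.mem⟩
  | succ k ih =>
    obtain ⟨huv, w, ⟨hvw, hwu⟩, hs⟩ := hs
    obtain ⟨y, q, hq, hlen, hqs⟩ := ih hvw hs
    exact ⟨y, .cons hvw q, (isNonBacktracking_cons_cons ..).2 ⟨hwu, hq⟩, by simp [hlen],
      List.forall_mem_cons.2 ⟨huv, hqs⟩⟩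

theorem mem_of_adj_openGraph (h : (openGraph s).Adj v w) : s(v, w) ∈ s :=
  ((SimpleGraph.fromEdgeSet_adj _).1 h).1

theorem branchSurvives_of_isPath (hs : openGraph s ≤ G) {y : α} (h : (openGraph s).Adj u v)
    (q : (openGraph s).Walk v y) (hq : (SimpleGraph.Walk.cons h q).IsPath) (hk : k ≤ q.length) :
    BranchSurvives G k u v s := by
  induction k generalizing u v with
  | zero => exact mem_of_adj_openGraph h
  | succ k ih =>
    cases q with
    | nil => simp at hk
    | @cons _ w _ h' q =>
      refine ⟨mem_of_adj_openGraph h, w, ⟨hs h', ?_⟩, ih h' q hq.of_cons (by simpa using hk)⟩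
      rintro rfl
      exact ((SimpleGraph.Walk.cons_isPath_iff _ _).1 hq).2 (by simp)

theorem disjoint_branch (hg : (2 * (k + 1) : ℕ) < G.egirth) (hw : G.Adj u v) (hw' : G.Adj u w)
    (hne : v ≠ w) : Disjoint (branch G k u v) (branch G k u w) := by
  refine Set.disjoint_left.2 fun e he he' => hne ?_
  obtain ⟨y, q, hq, hlen, heq, hy⟩ := exists_walk_of_mem_branch hw he
  obtain ⟨y', q', hq', hlen', heq', hy'⟩ := exists_walk_of_mem_branch hw' he'
  have hlen₂ : (SimpleGraph.Walk.cons hw q).length + (SimpleGraph.Walk.cons hw' q').length ≤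
      2 * (k + 1) := by
    simp only [SimpleGraph.Walk.length_cons]
    omega
  have hsupp := hq.support_eq hq' (lt_of_le_of_lt (mod_cast hlen₂) hg) heq hy heq' hy'
  rw [SimpleGraph.Walk.support_cons, SimpleGraph.Walk.support_cons,
    ← q.cons_tail_support, ← q'.cons_tail_support] at hsupp
  exact (List.cons.inj (List.cons.inj hsupp).2).1

theorem edge_notMem_branch (hg : (2 * (k + 2) : ℕ) < G.egirth) (huv : G.Adj u v)
    (hvw : G.Adj v w) (hwu : w ≠ u) : s(u, v) ∉ branch G k v w := fun he => by
  obtain ⟨y, q, hq, hlen, _, hy⟩ := exists_walk_of_mem_branch hvw he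
  have hlen₂ : (SimpleGraph.Walk.cons huv .nil).length +
      (SimpleGraph.Walk.cons huv (.cons hvw q)).length ≤ 2 * (k + 2) := by
    simp only [SimpleGraph.Walk.length_cons, SimpleGraph.Walk.length_nil]
    omega
  have hsupp := (isNonBacktracking_cons_nil huv).support_eq
    ((isNonBacktracking_cons_cons huv hvw q).2 ⟨hwu, hq⟩)
    (lt_of_le_of_lt (mod_cast hlen₂) hg) (e := s(u, v)) (by simp) (by simp) (by simp) hy
  simpa using congrArg List.length hsupp

end Exploration

section Survivors

variable {W : Type} [Fintype W] {G : SimpleGraph W} {d k : ℕ} {p : ℝ} {u v x y : W}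
  {s : Finset (Sym2 W)}

theorem openGraph_le (hs : s ⊆ edgeFinset' G) : openGraph s ≤ G := fun _ _ h =>
  mem_edgeFinset'.1 (hs (mem_of_adj_openGraph h))

theorem bernoulliProb_exists_branchSurvives (hg : (2 * (k + 1) : ℕ) < G.egirth) {N : Finset W}
    (hN : ∀ w ∈ N, G.Adj v w) {r : ℝ}
    (hr : ∀ w ∈ N, bernoulliProb (edgeFinset' G) p (BranchSurvives G k v w) = r) :
    bernoulliProb (edgeFinset' G) p (fun s => ∃ w ∈ N, BranchSurvives G k v w s) =
      unionProb N.card r := by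
  rw [bernoulliProb_exists_of_disjoint _ p (A := branch G k v)
    (fun w hw w' hw' hne => disjoint_branch hg (hN w hw) (hN w' hw') hne)
    fun w _ => determinedBy_branchSurvives G k v w,
    Finset.prod_congr rfl fun w hw => by rw [hr w hw], Finset.prod_const, unionProb]

theorem bernoulliProb_branchSurvives (hd : ∀ v, (G.neighborSet v).ncard = d)
    (hg : (2 * (k + 1) : ℕ) < G.egirth) (huv : G.Adj u v) :
    bernoulliProb (edgeFinset' G) p (BranchSurvives G k u v) = p * treeSurv (d - 1) p k := by
  have hmem : s(u, v) ∈ edgeFinset' G := mem_edgeFinset'.2 huv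
  induction k generalizing u v with
  | zero => exact (bernoulliProb_mem hmem p).trans (by simp [treeSurv])
  | succ k ih =>
    have hg' : (2 * (k + 1) : ℕ) < G.egirth := lt_of_le_of_lt (mod_cast by omega) hg
    set N := (Finset.univ.filter (G.Adj v)).erase u
    have hN : ∀ w, w ∈ N ↔ G.Adj v w ∧ w ≠ u := fun w => by simp [N, and_comm]
    have hcard : N.card = d - 1 := by
      rw [Finset.card_erase_of_mem (by simpa using huv.symm), card_filter_adj, hd]
    have hchildren := bernoulliProb_exists_branchSurvives (p := p) hg'
      (fun w hw => ((hN w).1 hw).1) fun w hw => ih hg' ((hN w).1 hw).1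
        (mem_edgeFinset'.2 ((hN w).1 hw).1)
    rw [hcard] at hchildren
    have hdisj : Disjoint {s(u, v)} (⋃ w ∈ N, branch G k v w) := by
      simp only [Set.disjoint_singleton_left, Set.mem_iUnion, not_exists]
      exact fun w hw => edge_notMem_branch hg huv ((hN w).1 hw).1 ((hN w).1 hw).2
    have hdet : DeterminedBy (⋃ w ∈ N, branch G k v w)
        fun s => ∃ w ∈ N, BranchSurvives G k v w s := fun s t hst => by
      refine propext (exists_congr fun w => and_congr_right fun hw => iff_of_eq ?_)
      exact determinedBy_branchSurvives G k v w fun e he => hst e (Set.mem_biUnion hw he)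
    have hand := bernoulliProb_and_of_disjoint (edgeFinset' G) p hdisj (determinedBy_mem _) hdet
    rw [bernoulliProb_mem hmem, hchildren] at hand
    simp only [hN] at hand
    exact hand

theorem bernoulliProb_survives (hd : ∀ v, (G.neighborSet v).ncard = d)
    (hg : (2 * (k + 1) : ℕ) < G.egirth) (v : W) :
    bernoulliProb (edgeFinset' G) p (Survives G k v) = rootSurv d p k := by
  have hroot := bernoulliProb_exists_branchSurvives (N := Finset.univ.filter (G.Adj v)) hg
    (v := v) (by simp) fun w hw => bernoulliProb_branchSurvives (p := p) hd hg (by simpa using hw)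
  rw [card_filter_adj, hd] at hroot
  rw [rootSurv, ← hroot]
  congr! 2 with s
  simp [Survives]

/-- The vertices which start a non-backtracking walk of `k + 1` open edges. -/
def survivors (G : SimpleGraph W) (k : ℕ) (s : Finset (Sym2 W)) : Finset W :=
  Finset.univ.filter fun v => Survives G k v s

theorem mem_survivors : v ∈ survivors G k s ↔ Survives G k v s := by simp [survivors]

theorem survivors_mono {t : Finset (Sym2 W)} (hst : s ⊆ t) :
    survivors G k s ⊆ survivors G k t := fun _ hv =>
  mem_survivors.2 ((mem_survivors.1 hv).mono hst)

theorem bernoulliExp_card_survivors (hd : ∀ v, (G.neighborSet v).ncard = d)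
    (hg : (2 * (k + 1) : ℕ) < G.egirth) (p : ℝ) :
    bernoulliExp (edgeFinset' G) p (fun s => ((survivors G k s).card : ℝ)) =
      Fintype.card W * rootSurv d p k := by
  simp only [survivors, Finset.card_filter, Nat.cast_sum, Nat.cast_ite, Nat.cast_one,
    Nat.cast_zero]
  rw [bernoulliExp_sum]
  change ∑ v, bernoulliProb (edgeFinset' G) p (Survives G k v) = _
  simp only [bernoulliProb_survives hd hg, Finset.sum_const, Finset.card_univ, nsmul_eq_mul]

theorem mem_closedBall_of_mem_branch (h : G.Adj u v) (he : s(x, y) ∈ branch G k u v) :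
    u ∈ closedBall G (k + 1) x := by
  obtain ⟨z, q, _, hlen, heq, _⟩ := exists_walk_of_mem_branch h he
  exact mem_closedBall_comm.1 (mem_closedBall_of_mem_support _ (by simpa using hlen)
    (SimpleGraph.Walk.fst_mem_support_of_mem_edges _ heq))

theorem survivors_subset_union_closedBall {t : Finset (Sym2 W)}
    (hst : ∀ e ≠ s(x, y), e ∈ s ↔ e ∈ t) :
    survivors G k s ⊆ survivors G k t ∪ closedBall G (k + 1) x := fun v hv => by
  refine Finset.mem_union.2 (or_iff_not_imp_right.2 fun hvx => ?_)
  obtain ⟨w, hvw, hw⟩ := mem_survivors.1 hv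
  refine mem_survivors.2 ⟨w, hvw, (iff_of_eq (determinedBy_branchSurvives G k v w ?_)).1 hw⟩
  exact fun e he => hst e fun h => hvx (mem_closedBall_of_mem_branch hvw (h ▸ he))

theorem hasBoundedDifferences_card_survivors (hd : ∀ v, (G.neighborSet v).ncard ≤ d) (k : ℕ) :
    HasBoundedDifferences (fun s => ((survivors G k s).card : ℝ)) ((d + 1) ^ (k + 1)) := by
  refine .of_forall_subset fun e s t hst hts => ?_
  induction e using Sym2.ind with
  | _ x y =>
    have hle : (survivors G k s).card ≤ (survivors G k t).card :=
      Finset.card_le_card (survivors_mono hst)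
    have hle' : (survivors G k t).card ≤ (survivors G k s).card + (d + 1) ^ (k + 1) :=
      (Finset.card_le_card (survivors_subset_union_closedBall hts)).trans
        ((Finset.card_union_le _ _).trans
          (Nat.add_le_add_left (card_closedBall_le hd (k + 1) x) _))
    rw [abs_of_nonneg (sub_nonneg.2 (mod_cast hle)), sub_le_iff_le_add']
    exact_mod_cast hle'

theorem le_card_closedBall_of_survives (hg : (k + 1 : ℕ) < G.egirth) (hv : Survives G k v s) :
    k + 2 ≤ (closedBall (openGraph s) (k + 1) v).card := by
  obtain ⟨w, hvw, hw⟩ := hv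
  obtain ⟨y, q, hq, hlen, hqs⟩ := exists_walk_of_branchSurvives hvw hw
  set r := SimpleGraph.Walk.cons hvw q
  have hrlen : r.length = k + 1 := by simp [r, hlen]
  have hr : r.IsPath := hq.isPath (hrlen ▸ hg)
  have hrs : ∀ e ∈ r.edges, e ∈ (openGraph s).edgeSet := fun e he => by
    rw [SimpleGraph.edgeSet_fromEdgeSet]
    exact ⟨hqs e he, G.not_isDiag_of_mem_edgeSet (r.edges_subset_edgeSet he)⟩
  calc k + 2 = r.support.toFinset.card := by
        rw [List.toFinset_card_of_nodup hr.support_nodup, SimpleGraph.Walk.length_support, hrlen]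
    _ ≤ _ := Finset.card_le_card fun z hz =>
        mem_closedBall_of_mem_support (r.transfer _ hrs) (by simp [hrlen]) (by simpa using hz)

theorem survives_of_lt_card_reachable (hd : ∀ v, (G.neighborSet v).ncard ≤ d)
    (hs : s ⊆ edgeFinset' G) {A : Finset W} (hA : ∀ y ∈ A, (openGraph s).Reachable v y)
    (hcard : (d + 1) ^ k < A.card) : Survives G k v s := by
  have hlt : (closedBall (openGraph s) k v).card < A.card :=
    ((Finset.card_le_card (closedBall_mono_graph (openGraph_le hs) k v)).trans
      (card_closedBall_le hd k v)).trans_lt hcard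
  obtain ⟨y, hyA, hy⟩ := Finset.exists_mem_notMem_of_card_lt_card hlt
  obtain ⟨q, hq⟩ := (hA y hyA).exists_isPath
  have hlen : k < q.length := by
    by_contra! hle
    exact hy (mem_closedBall_iff_exists_walk.2 ⟨q, hle⟩)
  cases q with
  | nil => simp at hlen
  | cons h q =>
    exact ⟨_, openGraph_le hs h, branchSurvives_of_isPath (openGraph_le hs) h q hq
      (Nat.lt_succ_iff.1 hlen)⟩

end Survivors

section DisjointFamilies

variable {α : Type*} {𝒬 : Finset (Finset α)} {E : Finset α} {p : ℝ}

/-- The number of members of the family `𝒬` which are contained in `t`. -/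
def containedCount (𝒬 : Finset (Finset α)) (t : Finset α) : ℕ :=
  (𝒬.filter (· ⊆ t)).card

theorem exists_disjoint_of_card_lt_card (hdis : (𝒬 : Set (Finset α)).PairwiseDisjoint id)
    {D : Finset α} (hD : D.card < 𝒬.card) : ∃ Q ∈ 𝒬, Disjoint Q D := by
  by_contra! hmeet
  refine hD.not_ge (Finset.card_le_card_of_forall_subsingleton (fun Q e => e ∈ Q)
    (fun Q hQ => ?_) fun e _ Q hQ Q' hQ' => hdis.elim_finset hQ.1 hQ'.1 e hQ.2 hQ'.2)
  obtain ⟨e, heQ, heD⟩ := Finset.not_disjoint_iff.1 (hmeet Q hQ)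
  exact ⟨e, heD, heQ⟩

theorem exists_subset_disjoint_of_card_lt_containedCount {t D : Finset α}
    (hdis : (𝒬 : Set (Finset α)).PairwiseDisjoint id) (hD : D.card < containedCount 𝒬 t) :
    ∃ Q ∈ 𝒬, Q ⊆ t ∧ Disjoint Q D := by
  obtain ⟨Q, hQ, hQD⟩ := exists_disjoint_of_card_lt_card
    (hdis.subset (Finset.coe_subset.2 (Finset.filter_subset _ _))) hD
  exact ⟨Q, (Finset.mem_filter.1 hQ).1, (Finset.mem_filter.1 hQ).2, hQD⟩

theorem hasBoundedDifferences_containedCount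
    (hdis : (𝒬 : Set (Finset α)).PairwiseDisjoint id) :
    HasBoundedDifferences (fun t => (containedCount 𝒬 t : ℝ)) 1 := by
  refine .of_forall_subset fun e s t hst hts => ?_
  have hle : containedCount 𝒬 s ≤ containedCount 𝒬 t :=
    Finset.card_le_card (Finset.monotone_filter_right _ fun _ _ h => h.trans hst)
  have hsub : 𝒬.filter (· ⊆ t) ⊆ 𝒬.filter (· ⊆ s) ∪ 𝒬.filter (e ∈ ·) := fun Q hQ => by
    obtain ⟨hQ, hQt⟩ := Finset.mem_filter.1 hQ
    by_cases he : e ∈ Q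
    · exact Finset.mem_union_right _ (Finset.mem_filter.2 ⟨hQ, he⟩)
    · exact Finset.mem_union_left _ (Finset.mem_filter.2 ⟨hQ, fun x hx =>
        (hts x (ne_of_mem_of_not_mem hx he)).1 (hQt hx)⟩)
  have hone : (𝒬.filter (e ∈ ·)).card ≤ 1 := by
    by_contra! hlt
    obtain ⟨Q, hQ, hQe⟩ := exists_disjoint_of_card_lt_card (D := {e})
      (hdis.subset (Finset.coe_subset.2 (Finset.filter_subset _ _))) (by simpa using hlt)
    exact Finset.disjoint_singleton_right.1 hQe (Finset.mem_filter.1 hQ).2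
  have hle' : containedCount 𝒬 t ≤ containedCount 𝒬 s + 1 :=
    (Finset.card_le_card hsub).trans
      ((Finset.card_union_le _ _).trans (Nat.add_le_add_left hone _))
  rw [abs_of_nonneg (sub_nonneg.2 (mod_cast hle)), sub_le_iff_le_add']
  exact_mod_cast hle'

theorem bernoulliExp_containedCount (h𝒬 : ∀ Q ∈ 𝒬, Q ⊆ E) (p : ℝ) :
    bernoulliExp E p (fun t => (containedCount 𝒬 t : ℝ)) = ∑ Q ∈ 𝒬, p ^ Q.card := by
  simp only [containedCount, Finset.card_filter, Nat.cast_sum, Nat.cast_ite, Nat.cast_one,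
    Nat.cast_zero]
  rw [bernoulliExp_sum]
  refine Finset.sum_congr rfl fun Q hQ => ?_
  rw [← bernoulliProb_subset (h𝒬 Q hQ), bernoulliProb]
  congr! 3

theorem bernoulliProb_containedCount_lt_le (h0 : 0 ≤ p) (h1 : p ≤ 1)
    (hdis : (𝒬 : Set (Finset α)).PairwiseDisjoint id) (h𝒬 : ∀ Q ∈ 𝒬, Q ⊆ E) {L : ℕ}
    (hL : ∀ Q ∈ 𝒬, Q.card ≤ L) {m D : ℝ} (hm0 : 0 ≤ m) (hm : 2 * m ≤ 𝒬.card * p ^ L)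
    (hD : E.card ≤ D) :
    bernoulliProb E p (fun t => (containedCount 𝒬 t : ℝ) < m) ≤ Real.exp (-2 * m ^ 2 / D) := by
  have hmean : 2 * m ≤ bernoulliExp E p (fun t => (containedCount 𝒬 t : ℝ)) := by
    rw [bernoulliExp_containedCount h𝒬]
    refine hm.trans ?_
    rw [← nsmul_eq_mul]
    exact Finset.card_nsmul_le_sum _ _ _ fun Q hQ => pow_le_pow_of_le_one h0 h1 (hL Q hQ)
  refine (bernoulliProb_mono h0 h1 fun t _ ht => ?_).trans
    ((hasBoundedDifferences_containedCount hdis).bernoulliProb_le_sub_le h0 h1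
      (by simpa using hD) hm0)
  linarith

end DisjointFamilies

section Connectors

variable {W : Type} [Fintype W] {G : SimpleGraph W} {A B : Finset W} {L : ℕ}

/-- A set of at most `L` edges of `G` which joins `A` to `B`. -/
def IsConnector (G : SimpleGraph W) (L : ℕ) (A B : Finset W) (Q : Finset (Sym2 W)) : Prop :=
  Q ⊆ edgeFinset' G ∧ Q.card ≤ L ∧ ∃ x ∈ A, ∃ y ∈ B, (openGraph Q).Reachable x y

theorem IsConnector.nonempty {Q : Finset (Sym2 W)} (hQ : IsConnector G L A B Q)
    (hAB : Disjoint A B) : Q.Nonempty := by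
  obtain ⟨_, _, x, hx, y, hy, ⟨q⟩⟩ := hQ
  cases q with
  | nil => exact absurd hy (Finset.disjoint_left.1 hAB hx)
  | cons h _ => exact ⟨_, mem_of_adj_openGraph h⟩

/-- The sets `A` and `B` remain joined in `H` after the deletion of any set of fewer than `m`
edges. -/
def IsEdgeLinked {α : Type*} (H : SimpleGraph α) (m : ℝ) (A B : Finset α) : Prop :=
  ∀ D : Finset (Sym2 α), (D.card : ℝ) < m →
    ∃ x ∈ A, ∃ y ∈ B, (H.deleteEdges ↑D).Reachable x y

theorem isEdgeLinked_openGraph_of_le_containedCount {𝒬 : Finset (Finset (Sym2 W))}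
    {m : ℝ} {t : Finset (Sym2 W)} (hdis : (𝒬 : Set (Finset (Sym2 W))).PairwiseDisjoint id)
    (hcon : ∀ Q ∈ 𝒬, IsConnector G L A B Q) (hm : m ≤ containedCount 𝒬 t) :
    IsEdgeLinked (openGraph t) m A B := fun D hD => by
  obtain ⟨Q, hQ, hQt, hQD⟩ := exists_subset_disjoint_of_card_lt_containedCount hdis
    (Nat.cast_lt.1 (hD.trans_le hm))
  obtain ⟨_, _, x, hx, y, hy, hxy⟩ := hcon Q hQ
  refine ⟨x, hx, y, hy, hxy.mono fun v w hvw => ?_⟩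
  have he := mem_of_adj_openGraph hvw
  exact SimpleGraph.deleteEdges_adj.2 ⟨(SimpleGraph.fromEdgeSet_adj _).2 ⟨hQt he, hvw.ne⟩,
    Finset.disjoint_left.1 hQD he⟩

end Connectors

section ExpanderLinking

variable {G : SimpleGraph V} {A B : Finset V} {D : Finset (Sym2 V)} {b a η p : ℝ} {d l : ℕ}

theorem cutCard_nbhd_add_le (hd : ∀ v, (G.neighborSet v).ncard ≤ d) (k : ℕ) (A : Finset V)
    (D : Finset (Sym2 V)) :
    cutCard G (nbhd (G.deleteEdges ↑D) k A) + (nbhd (G.deleteEdges ↑D) k A).card * d ≤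
      D.card + (nbhd (G.deleteEdges ↑D) (k + 1) A).card * d := by
  set U := nbhd (G.deleteEdges ↑D) k A
  set U' := nbhd (G.deleteEdges ↑D) (k + 1) A
  have hUU' : U ⊆ U' := nbhd_subset_nbhd_succ _ k A
  have hcut : cutCard G U ≤ (D ∪ incidentEdges G (U' \ U)).card := by
    refine Finset.card_le_card fun e he => ?_
    obtain ⟨heG, x, hx, y, hy, rfl⟩ := Finset.mem_filter.1 he
    refine Finset.mem_union.2 (or_iff_not_imp_left.2 fun heD => ?_)
    have hadj : (G.deleteEdges ↑D).Adj x y :=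
      (G.deleteEdges_adj).2 ⟨mem_edgeFinset'.1 heG, heD⟩
    exact mem_incidentEdges.2 ⟨heG, y,
      Finset.mem_sdiff.2 ⟨mem_nbhd_succ_of_adj hx hadj, hy⟩, Sym2.mem_mk_right x y⟩
  have hnew : (U' \ U).card * d + U.card * d = U'.card * d := by
    rw [← add_mul, Finset.card_sdiff_add_card_eq_card hUU']
  have := Finset.card_union_le D (incidentEdges G (U' \ U))
  have := card_incidentEdges_le hd (U' \ U)
  omega

theorem IsExpander.half_lt_card_nbhd_deleteEdges (hG : IsExpander G b d) (hb : 0 ≤ b)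
    (hA : a ≤ A.card) (hD : D.card ≤ b * a / 2) (hl : d * Fintype.card V < b * a * l) :
    (Fintype.card V : ℝ) / 2 < (nbhd (G.deleteEdges ↑D) l A).card := by
  have hgrowth : ∀ i : ℕ, (Fintype.card V : ℝ) / 2 < (nbhd (G.deleteEdges ↑D) i A).card ∨
      b * a / 2 * i ≤ (nbhd (G.deleteEdges ↑D) i A).card * d := fun i => by
    induction i with
    | zero => exact .inr (by simpa using by positivity)
    | succ i ih =>
      have hmono : ((nbhd (G.deleteEdges ↑D) i A).card : ℝ) ≤
          (nbhd (G.deleteEdges ↑D) (i + 1) A).card :=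
        mod_cast Finset.card_le_card (nbhd_subset_nbhd_succ _ i A)
      rcases lt_or_ge ((Fintype.card V : ℝ) / 2) (nbhd (G.deleteEdges ↑D) i A).card with hi | hi
      · exact .inl (hi.trans_le hmono)
      have hcut : b * a ≤ cutCard G (nbhd (G.deleteEdges ↑D) i A) :=
        (mul_le_mul_of_nonneg_left (hA.trans
          (mod_cast Finset.card_le_card (subset_nbhd (G.deleteEdges ↑D) i A))) hb).trans
          (hG.2 _ hi)
      have hstep : (cutCard G (nbhd (G.deleteEdges ↑D) i A) : ℝ) +
          (nbhd (G.deleteEdges ↑D) i A).card * d ≤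
          D.card + (nbhd (G.deleteEdges ↑D) (i + 1) A).card * d :=
        mod_cast cutCard_nbhd_add_le hG.1 i A D
      have hprev := ih.resolve_left hi.not_gt
      refine .inr ?_
      push_cast
      linarith
  refine (hgrowth l).elim id fun h => lt_of_mul_lt_mul_right ?_ (Nat.cast_nonneg d)
  linarith

theorem IsExpander.exists_isConnector_disjoint (hG : IsExpander G b d) (hb : 0 ≤ b)
    (hA : a ≤ A.card) (hB : a ≤ B.card) (hD : D.card ≤ b * a / 2)
    (hl : d * Fintype.card V < b * a * l) :
    ∃ Q, IsConnector G (2 * l) A B Q ∧ Disjoint Q D := by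
  obtain ⟨z, hzA, hzB⟩ :
      ∃ z, z ∈ nbhd (G.deleteEdges ↑D) l A ∧ z ∈ nbhd (G.deleteEdges ↑D) l B := by
    refine Finset.not_disjoint_iff.1 fun hdisj => ?_
    have hcard := Finset.card_le_univ (nbhd (G.deleteEdges ↑D) l A ∪ nbhd (G.deleteEdges ↑D) l B)
    rw [Finset.card_union_of_disjoint hdisj, ← @Nat.cast_le ℝ, Nat.cast_add] at hcard
    linarith [hG.half_lt_card_nbhd_deleteEdges hb hA hD hl,
      hG.half_lt_card_nbhd_deleteEdges hb hB hD hl]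
  obtain ⟨x, hx, hxz⟩ := mem_nbhd.1 hzA
  obtain ⟨y, hy, hyz⟩ := mem_nbhd.1 hzB
  obtain ⟨q, hq⟩ := mem_closedBall_iff_exists_walk.1
    (mem_closedBall_trans hxz (mem_closedBall_comm.1 hyz))
  have hqD : ∀ e ∈ q.edges, e ∈ G.edgeSet ∧ e ∉ D := fun e he => by
    simpa [SimpleGraph.edgeSet_deleteEdges] using q.edges_subset_edgeSet he
  refine ⟨q.edges.toFinset, ⟨fun e he => ?_, ?_, x, hx, y, hy, ?_⟩, ?_⟩
  · exact mem_edgeFinset'.2 (hqD e (List.mem_toFinset.1 he)).1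
  · exact (List.toFinset_card_le _).trans (by rw [q.length_edges]; omega)
  · refine ⟨q.transfer _ fun e he => ?_⟩
    rw [SimpleGraph.edgeSet_fromEdgeSet]
    exact ⟨by simpa using he, G.not_isDiag_of_mem_edgeSet (hqD e he).1⟩
  · exact Finset.disjoint_left.2 fun e he => (hqD e (List.mem_toFinset.1 he)).2

theorem IsExpander.exists_pairwiseDisjoint_isConnector (hG : IsExpander G b d) (hb : 0 ≤ b)
    (hAB : Disjoint A B) (hA : a ≤ A.card) (hB : a ≤ B.card)
    (hl : d * Fintype.card V < b * a * l) :
    ∃ 𝒬 : Finset (Finset (Sym2 V)), (𝒬 : Set (Finset (Sym2 V))).PairwiseDisjoint id ∧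
      (∀ Q ∈ 𝒬, IsConnector G (2 * l) A B Q) ∧ b * a / 2 ≤ 𝒬.card * (2 * l : ℕ) := by
  obtain ⟨𝒬, ⟨hdis, hcon⟩, hmax⟩ := (Set.toFinite {𝒬 : Finset (Finset (Sym2 V)) |
    (𝒬 : Set (Finset (Sym2 V))).PairwiseDisjoint id ∧
      ∀ Q ∈ 𝒬, IsConnector G (2 * l) A B Q}).exists_maximal ⟨∅, by simp⟩
  refine ⟨𝒬, hdis, hcon, ?_⟩
  by_contra! hlt
  have hcard : ((𝒬.biUnion id).card : ℝ) ≤ 𝒬.card * (2 * l : ℕ) :=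
    mod_cast Finset.card_biUnion_le_card_mul _ _ _ fun Q hQ => (hcon Q hQ).2.1
  obtain ⟨Q, hQ, hQdis⟩ := hG.exists_isConnector_disjoint hb hA hB (hcard.trans hlt.le) hl
  have hQmem : Q ∈ 𝒬 := by
    refine hmax (y := insert Q 𝒬) ⟨?_, (Finset.forall_mem_insert _ _ _).2 ⟨hQ, hcon⟩⟩
      (Finset.subset_insert Q 𝒬) (Finset.mem_insert_self Q 𝒬)
    rw [Finset.coe_insert]
    exact hdis.insert fun Q' hQ' _ => hQdis.mono_right (Finset.subset_biUnion_of_mem id hQ')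
  exact (hQ.nonempty hAB).ne_empty
    (disjoint_self.1 (hQdis.mono_right (Finset.subset_biUnion_of_mem id hQmem)))

theorem exists_bernoulliProb_not_isEdgeLinked_le (hd : 0 < d) (hb : 0 < b) (hη : 0 < η)
    (h0 : 0 < p) (h1 : p ≤ 1) :
    ∃ κ > (0 : ℝ), ∃ γ > (0 : ℝ), ∀ (V : Type) [Fintype V] [DecidableEq V] [Nonempty V]
      (G : SimpleGraph V), IsExpander G b d → ∀ A B : Finset V, Disjoint A B →
      η * Fintype.card V ≤ A.card → η * Fintype.card V ≤ B.card →
      bernoulliProb (edgeFinset' G) p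
        (fun t => ¬IsEdgeLinked (openGraph t) (κ * Fintype.card V) A B) ≤
        Real.exp (-γ * Fintype.card V) := by
  obtain ⟨l, hl⟩ := exists_nat_gt (d / (b * η))
  have hl0 : (0 : ℝ) < l := lt_of_le_of_lt (by positivity) hl
  rw [div_lt_iff₀ (by positivity)] at hl
  set κ : ℝ := b * η / (8 * l) * p ^ (2 * l)
  have hκ : 0 < κ := by positivity
  refine ⟨κ, hκ, 2 * κ ^ 2 / d, by positivity, fun V _ _ _ G hG A B hAB hA hB => ?_⟩
  set n : ℝ := (Fintype.card V : ℝ)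
  have hn : 0 < n := Nat.cast_pos.2 Fintype.card_pos
  obtain ⟨𝒬, hdis, hcon, hcard⟩ := hG.exists_pairwiseDisjoint_isConnector hb.le hAB hA hB
    (l := l) (by nlinarith)
  have hm : 2 * (κ * n) ≤ 𝒬.card * p ^ (2 * l) := by
    have h𝒬 : b * η * n / (4 * l) ≤ 𝒬.card := by
      rw [div_le_iff₀ (by positivity)]
      push_cast at hcard
      linarith
    calc 2 * (κ * n) = b * η * n / (4 * l) * p ^ (2 * l) := by simp only [κ]; ring
      _ ≤ _ := mul_le_mul_of_nonneg_right h𝒬 (by positivity)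
  have hE : ((edgeFinset' G).card : ℝ) ≤ n * d :=
    (Nat.cast_le.2 (card_edgeFinset'_le hG.1)).trans_eq (Nat.cast_mul _ _)
  calc _ ≤ bernoulliProb (edgeFinset' G) p (fun t => (containedCount 𝒬 t : ℝ) < κ * n) :=
        bernoulliProb_mono h0.le h1 fun t _ ht => not_le.1 fun hle =>
          ht (isEdgeLinked_openGraph_of_le_containedCount hdis hcon hle)
    _ ≤ Real.exp (-2 * (κ * n) ^ 2 / (n * d)) :=
        bernoulliProb_containedCount_lt_le h0.le h1 hdis (fun Q hQ => (hcon Q hQ).1)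
          (fun Q hQ => (hcon Q hQ).2.1) (by positivity) hm hE
    _ = _ := by
        congr 1
        field_simp

end ExpanderLinking

section Nets

variable {α : Type*} [Fintype α] {H : SimpleGraph α} {r m : ℕ} {N : Finset α}

theorem exists_net (H : SimpleGraph α) (r : ℕ) (A : Finset α) :
    ∃ N ⊆ A, (N : Set α).PairwiseDisjoint (closedBall H r) ∧ A ⊆ nbhd H (r + r) N := by
  obtain ⟨N, ⟨hNA, hdis⟩, hmax⟩ := (Set.toFinite {N : Finset α |
    N ⊆ A ∧ (N : Set α).PairwiseDisjoint (closedBall H r)}).exists_maximal ⟨∅, by simp⟩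
  refine ⟨N, hNA, hdis, fun v hv => ?_⟩
  by_contra hvN
  have hfar : ∀ x ∈ N, Disjoint (closedBall H r v) (closedBall H r x) := fun x hx =>
    Finset.disjoint_left.2 fun y hyv hyx => hvN (mem_nbhd.2
      ⟨x, hx, mem_closedBall_trans hyx (mem_closedBall_comm.1 hyv)⟩)
  have hins : insert v N ⊆ N := by
    refine hmax ⟨Finset.insert_subset hv hNA, ?_⟩ (Finset.subset_insert v N)
    rw [Finset.coe_insert]
    exact hdis.insert fun x hx _ => hfar x hx
  exact hvN (subset_nbhd H _ N (hins (Finset.mem_insert_self v N)))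

theorem card_mul_le_of_pairwiseDisjoint_closedBall
    (hdis : (N : Set α).PairwiseDisjoint (closedBall H r))
    (hm : ∀ x ∈ N, m ≤ (closedBall H r x).card) : N.card * m ≤ Fintype.card α :=
  calc N.card * m ≤ ∑ x ∈ N, (closedBall H r x).card := Finset.card_nsmul_le_sum _ _ _ hm
    _ = (N.biUnion (closedBall H r)).card := (Finset.card_biUnion hdis).symm
    _ ≤ Fintype.card α := Finset.card_le_univ _

end Nets

section Boundaries

variable {α : Type*} {H H' : SimpleGraph α} {A S : Finset α} {u v x : α} {r : ℕ}

/-- Every neighbour in `H` of a vertex of `A` lies in `A` or in `S`: the vertex boundary of `A` is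
contained in `S`. -/
def BoundaryIn (H : SimpleGraph α) (A S : Finset α) : Prop :=
  ∀ u ∈ A, ∀ v, H.Adj u v → v ∈ A ∨ v ∈ S

theorem BoundaryIn.anti (hA : BoundaryIn H' A S) (h : H ≤ H') : BoundaryIn H A S :=
  fun u hu v huv => hA u hu v (h huv)

theorem BoundaryIn.mem_of_walk (hA : BoundaryIn H A S) (q : H.Walk u v)
    (hq : ∀ z ∈ q.support, z ∉ S) (hu : u ∈ A) : v ∈ A := by
  induction q with
  | nil => exact hu
  | cons h q ih =>
    exact ih (fun z hz => hq z (by simp [hz])) ((hA _ hu _ h).resolve_right (hq _ (by simp)))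

theorem BoundaryIn.closedBall_subset [Fintype α] (hA : BoundaryIn H A S)
    (hS : Disjoint (closedBall H r x) S) (hv : v ∈ closedBall H r x) (hvA : v ∈ A) :
    closedBall H r x ⊆ A := by
  have havoid : ∀ {y} (q : H.Walk x y), q.length ≤ r → ∀ z ∈ q.support, z ∉ S :=
    fun q hq z hz => Finset.disjoint_left.1 hS (mem_closedBall_of_mem_support q hq hz)
  obtain ⟨q, hq⟩ := mem_closedBall_iff_exists_walk.1 hv
  have hx : x ∈ A := hA.mem_of_walk q.reverse
    (fun z hz => havoid q hq z (by simpa using hz)) hvA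
  intro y hy
  obtain ⟨q', hq'⟩ := mem_closedBall_iff_exists_walk.1 hy
  exact hA.mem_of_walk q' (havoid q' hq') hx

theorem BoundaryIn.card_inter_le [Fintype α] {G : SimpleGraph α} {d : ℕ} {N U : Finset α}
    (hA : BoundaryIn H A S) (hd : ∀ v, (G.neighborSet v).ncard ≤ d) (hHG : H ≤ G)
    (hU : U ⊆ nbhd H r N) :
    (A ∩ U).card ≤ (nbhd H r (N.filter (closedBall H r · ⊆ A))).card +
      S.card * (d + 1) ^ (r + r) := by
  have hsub : A ∩ U ⊆ nbhd H r (N.filter (closedBall H r · ⊆ A)) ∪ nbhd G (r + r) S := by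
    intro v hv
    obtain ⟨hvA, hvU⟩ := Finset.mem_inter.1 hv
    obtain ⟨x, hx, hvx⟩ := mem_nbhd.1 (hU hvU)
    by_cases hS : Disjoint (closedBall H r x) S
    · exact Finset.mem_union_left _ (mem_nbhd.2
        ⟨x, Finset.mem_filter.2 ⟨hx, hA.closedBall_subset hS hvx hvA⟩, hvx⟩)
    · obtain ⟨z, hz, hzS⟩ := Finset.not_disjoint_iff.1 hS
      exact Finset.mem_union_right _ (mem_nbhd.2 ⟨z, hzS, closedBall_mono_graph hHG _ _
        (mem_closedBall_trans (mem_closedBall_comm.1 hz) hvx)⟩)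
  exact (Finset.card_le_card hsub).trans ((Finset.card_union_le _ _).trans
    (Nat.add_le_add_left (card_nbhd_le hd _ S) _))

theorem BoundaryIn.of_induce_supp {c : H.ConnectedComponent}
    {A S : Finset c.supp}
    (hA : BoundaryIn (H.induce c.supp) A S) :
    BoundaryIn H (A.map (.subtype (· ∈ c.supp))) (S.map (.subtype (· ∈ c.supp))) := by
  intro u hu v huv
  obtain ⟨w, hw, rfl⟩ := Finset.mem_map.1 hu
  have hv : v ∈ c.supp := c.mem_supp_of_adj_mem_supp w.2 huv
  exact (hA w hw ⟨v, hv⟩ huv).imp (Finset.mem_map_of_mem _) (Finset.mem_map_of_mem _)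

end Boundaries

section LinkedPieces

variable {W : Type} [Fintype W] {G H H₁ H₂ : SimpleGraph W} {A B S N U : Finset W} {d r : ℕ}
  {h m M : ℝ}

/-- Any two disjoint `r`-neighbourhoods in `H₁` of subsets of `N` having at least `h` vertices each
remain joined in `H₂` after the deletion of any set of fewer than `m` edges. -/
def PiecesLinked (H₁ H₂ : SimpleGraph W) (r : ℕ) (h m : ℝ) (N : Finset W) : Prop :=
  ∀ I ⊆ N, ∀ J ⊆ N, Disjoint (nbhd H₁ r I) (nbhd H₁ r J) → h ≤ (nbhd H₁ r I).card →
    h ≤ (nbhd H₁ r J).card → IsEdgeLinked H₂ m (nbhd H₁ r I) (nbhd H₁ r J)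

theorem PiecesLinked.card_inter_lt (hlink : PiecesLinked H₁ H₂ r h m N) (h₁ : H₁ ≤ H)
    (h₂ : H₂ ≤ H) (hHG : H ≤ G) (hd : ∀ v, (G.neighborSet v).ncard ≤ d)
    (hU : U ⊆ nbhd H₁ r N) (hAB : Disjoint A B) (hA : BoundaryIn H A S)
    (hB : BoundaryIn H B S) (hS : (S.card : ℝ) * d < m)
    (hAU : h + S.card * ((d : ℝ) + 1) ^ (r + r) ≤ (A ∩ U).card) :
    ((B ∩ U).card : ℝ) < h + S.card * ((d : ℝ) + 1) ^ (r + r) := by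
  by_contra! hBU
  have hpieces : ∀ {C}, BoundaryIn H C S →
      h + S.card * ((d : ℝ) + 1) ^ (r + r) ≤ (C ∩ U).card →
      h ≤ (nbhd H₁ r (N.filter (closedBall H₁ r · ⊆ C))).card := fun hC hCU => by
    have := Nat.cast_le (α := ℝ).2 ((hC.anti h₁).card_inter_le hd (h₁.trans hHG) hU)
    push_cast at this
    linarith
  have hsub : ∀ C, nbhd H₁ r (N.filter (closedBall H₁ r · ⊆ C)) ⊆ C := fun C v hv => by
    obtain ⟨x, hx, hvx⟩ := mem_nbhd.1 hv
    exact (Finset.mem_filter.1 hx).2 hvx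
  obtain ⟨x, hx, y, hy, ⟨q⟩⟩ := hlink _ (Finset.filter_subset _ _) _ (Finset.filter_subset _ _)
    (hAB.mono (hsub A) (hsub B)) (hpieces hA hAU) (hpieces hB hBU) (incidentEdges G S)
    (lt_of_le_of_lt (mod_cast card_incidentEdges_le hd S) hS)
  have hclosed : BoundaryIn (H₂.deleteEdges ↑(incidentEdges G S)) A ∅ := fun u hu v huv => by
    obtain ⟨huv, hnot⟩ := SimpleGraph.deleteEdges_adj.1 huv
    refine .inl ((hA u hu v (h₂ huv)).resolve_right fun hvS => hnot ?_)
    exact mem_incidentEdges.2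
      ⟨mem_edgeFinset'.2 (hHG (h₂ huv)), v, hvS, Sym2.mem_mk_right u v⟩
  exact Finset.disjoint_left.1 hAB (hclosed.mem_of_walk q (by simp) (hsub A hx)) (hsub B hy)

theorem exists_card_filter_comp_mem_Icc {α β : Type*} (f : α → β) (U : Finset α) {a M : ℝ}
    (ha : 0 ≤ a) (hM : 0 ≤ M) (hf : ∀ b, ((U.filter (f · = b)).card : ℝ) ≤ M)
    (hU : a ≤ U.card) :
    ∃ P : β → Prop, ((U.filter fun v => P (f v)).card : ℝ) ∈ Set.Icc a (a + M) := by
  suffices ∀ T : Finset β, a ≤ (U.filter (f · ∈ T)).card →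
      ∃ T : Finset β, ((U.filter (f · ∈ T)).card : ℝ) ∈ Set.Icc a (a + M) by
    obtain ⟨T, hT⟩ := this (U.image f) (hU.trans_eq (by
      rw [Finset.filter_true_of_mem fun v hv => Finset.mem_image_of_mem f hv]))
    exact ⟨(· ∈ T), by convert hT⟩
  intro T hT
  induction T using Finset.induction_on with
  | empty => exact ⟨∅, hT, by simpa using add_nonneg ha hM⟩
  | insert b T _ ih =>
    rcases le_or_gt a (U.filter (f · ∈ T)).card with hle | hlt
    · exact ih hle
    refine ⟨insert b T, hT, ?_⟩
    have hsplit : (U.filter (f · ∈ insert b T)).card ≤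
        (U.filter (f · = b)).card + (U.filter (f · ∈ T)).card := by
      simp only [Finset.mem_insert, Finset.filter_or]
      exact Finset.card_union_le _ _
    have := Nat.cast_le (α := ℝ).2 hsplit
    push_cast at this
    linarith [hf b]

theorem mem_compVerts {c : H.ConnectedComponent} {v : W} :
    v ∈ compVerts H c ↔ H.connectedComponentMk v = c := by
  simp [compVerts]

theorem connectedComponentMk_eq_of_mem_closedBall (h₁ : H₁ ≤ H) {v x : W}
    (hv : v ∈ closedBall H₁ r x) : H.connectedComponentMk v = H.connectedComponentMk x :=
  (SimpleGraph.ConnectedComponent.eq.2 ((reachable_of_mem_closedBall hv).mono h₁)).symm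

theorem PiecesLinked.exists_lt_card_compVerts (hlink : PiecesLinked H₁ H₂ r h m N)
    (h₁ : H₁ ≤ H) (h₂ : H₂ ≤ H) (hU : U ⊆ nbhd H₁ r N) (hm : 0 < m) (hh : 0 ≤ h)
    (hM : 0 ≤ M) (hcard : 2 * h + M ≤ U.card) :
    ∃ c : H.ConnectedComponent, M < (compVerts H c).card := by
  by_contra! hsmall
  obtain ⟨P, hP, hP'⟩ := exists_card_filter_comp_mem_Icc H.connectedComponentMk U hh hM
    (fun c => le_trans (mod_cast Finset.card_le_card fun v hv =>
      mem_compVerts.2 (Finset.mem_filter.1 hv).2) (hsmall c)) (by linarith)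
  have hcover : ∀ (Q : H.ConnectedComponent → Prop) [DecidablePred Q],
      U.filter (fun v => Q (H.connectedComponentMk v)) ⊆
        nbhd H₁ r (N.filter fun v => Q (H.connectedComponentMk v)) := fun Q _ v hv => by
    obtain ⟨hvU, hvQ⟩ := Finset.mem_filter.1 hv
    obtain ⟨x, hx, hvx⟩ := mem_nbhd.1 (hU hvU)
    rw [connectedComponentMk_eq_of_mem_closedBall h₁ hvx] at hvQ
    exact mem_nbhd.2 ⟨x, Finset.mem_filter.2 ⟨hx, hvQ⟩, hvx⟩
  have hpiece : ∀ (Q : H.ConnectedComponent → Prop) [DecidablePred Q],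
      ∀ v ∈ nbhd H₁ r (N.filter fun v => Q (H.connectedComponentMk v)),
        Q (H.connectedComponentMk v) := fun Q _ v hv => by
    obtain ⟨x, hx, hvx⟩ := mem_nbhd.1 hv
    rw [connectedComponentMk_eq_of_mem_closedBall h₁ hvx]
    exact (Finset.mem_filter.1 hx).2
  have hsplit : ((U.filter fun v => P (H.connectedComponentMk v)).card : ℝ) +
      (U.filter fun v => ¬P (H.connectedComponentMk v)).card = U.card :=
    mod_cast Finset.card_filter_add_card_filter_not (s := U) _
  obtain ⟨x, hx, y, hy, hxy⟩ := hlink _ (Finset.filter_subset _ _) _ (Finset.filter_subset _ _)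
    (Finset.disjoint_left.2 fun v hv hv' => hpiece (¬P ·) v hv' (hpiece P v hv))
    (hP.trans (mod_cast Finset.card_le_card (hcover P)))
    (le_trans (by linarith) (Nat.cast_le.2 (Finset.card_le_card (hcover (¬P ·))))) ∅
    (by simpa using hm)
  refine hpiece (¬P ·) y hy ?_
  rw [← SimpleGraph.ConnectedComponent.eq.2 (hxy.mono ((H₂.deleteEdges_le _).trans h₂))]
  exact hpiece P x hx

end LinkedPieces

section Separators

variable {W : Type} [Fintype W] {G H : SimpleGraph W} {N : Finset W} {s t u : Finset (Sym2 W)}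
  {d k r : ℕ} {e h m M q : ℝ}

/-- No largest connected component of `H` has a separator with at most `q` vertices.
The quantified instance keeps the notion independent of how `c.supp` is shown to be finite. -/
def LargestCompsUnseparated (H : SimpleGraph W) (q : ℝ) : Prop :=
  ∀ c : H.ConnectedComponent, IsLargestComp H c → ∀ [Fintype c.supp] (S : Finset c.supp),
    (S.card : ℝ) ≤ q → ¬IsSeparator (H.induce c.supp) S

theorem compVerts_subset_survivors (hd : ∀ v, (G.neighborSet v).ncard ≤ d)
    (hs : s ⊆ edgeFinset' G) {c : (openGraph s).ConnectedComponent}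
    (hc : (d + 1) ^ k < (compVerts (openGraph s) c).card) :
    compVerts (openGraph s) c ⊆ survivors G k s := fun _ hv =>
  mem_survivors.2 (survives_of_lt_card_reachable hd hs (fun _ hy =>
    SimpleGraph.ConnectedComponent.eq.1 ((mem_compVerts.1 hv).trans (mem_compVerts.1 hy).symm)) hc)

theorem card_supp_eq_card_compVerts (c : H.ConnectedComponent) [Fintype c.supp] :
    Fintype.card c.supp = (compVerts H c).card :=
  Fintype.card_of_subtype _ fun _ => mem_compVerts.trans
    (SimpleGraph.ConnectedComponent.mem_supp_iff _ _).symm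

theorem IsSeparator.exists_boundaryIn {S : Finset W} (h : IsSeparator H S) :
    ∃ A B : Finset W, Disjoint A B ∧ BoundaryIn H A S ∧ BoundaryIn H B S ∧
      Fintype.card W ≤ 3 * (A.card + S.card) ∧ Fintype.card W ≤ 3 * (B.card + S.card) := by
  obtain ⟨A, B, hAB, -, -, hcover, hadj, hA, hB⟩ := h
  have htotal : Fintype.card W ≤ A.card + B.card + S.card :=
    calc Fintype.card W ≤ (A ∪ B ∪ S).card := Finset.card_le_card fun w _ => by
          rcases hcover w with h | h | h <;> simp [h]
      _ ≤ _ := (Finset.card_union_le _ _).trans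
          (Nat.add_le_add_right (Finset.card_union_le _ _) _)
  refine ⟨A, B, hAB, fun a ha v hav => ?_, fun b hb v hbv => ?_, by omega, by omega⟩
  · exact (hcover v).imp_right (Or.resolve_left · fun hv => hadj a ha v hv hav)
  · exact (hcover v).resolve_left fun hv => hadj v hv b hb hbv.symm

theorem le_card_inter_of_subset {α : Type*} {A U U' : Finset α} (hA : A ⊆ U') (hU : U ⊆ U')
    (he : (U'.card : ℝ) ≤ U.card + e) : (A.card : ℝ) ≤ (A ∩ U).card + e := by
  have : A.card + U.card ≤ U'.card + (A ∩ U).card := by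
    rw [← Finset.card_union_add_card_inter]
    exact Nat.add_le_add_right (Finset.card_le_card (Finset.union_subset hA hU)) _
  have := Nat.cast_le (α := ℝ).2 this
  push_cast at this
  linarith

theorem PiecesLinked.largestCompsUnseparated
    (hlink : PiecesLinked (openGraph s) (openGraph t) r h m N)
    (hd : ∀ v, (G.neighborSet v).ncard ≤ d) (hu : u ⊆ edgeFinset' G) (hs : s ⊆ u) (ht : t ⊆ u)
    (hN : survivors G k s ⊆ nbhd (openGraph s) r N) (hm : 0 < m) (hh : 0 ≤ h)
    (hM : ((d : ℝ) + 1) ^ k ≤ M) (hlow : 2 * h + M ≤ (survivors G k s).card)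
    (hup : ((survivors G k u).card : ℝ) ≤ (survivors G k s).card + e) (hq : q * d < m)
    (hbal : h + q * ((d : ℝ) + 1) ^ (r + r) + e + q ≤ M / 3) :
    LargestCompsUnseparated (openGraph u) q := by
  intro c hc _ S hS hsep
  obtain ⟨A, B, hAB, hA, hB, hAcard, hBcard⟩ := hsep.exists_boundaryIn
  have hmono : ∀ {s'}, s' ⊆ u → openGraph s' ≤ openGraph u := fun h =>
    SimpleGraph.fromEdgeSet_mono (Finset.coe_subset.2 h)
  obtain ⟨c₀, hc₀⟩ := hlink.exists_lt_card_compVerts (hmono hs) (hmono ht) hN hm hh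
    (le_trans (by positivity) hM) hlow
  have hcM : M < (compVerts (openGraph u) c).card := hc₀.trans_le (Nat.cast_le.2 (hc c₀))
  have hlarge : ∀ D : Finset c.supp, Fintype.card c.supp ≤ 3 * (D.card + S.card) →
      h + q * ((d : ℝ) + 1) ^ (r + r) ≤
        (D.map (.subtype (· ∈ c.supp)) ∩ survivors G k s).card := fun D hD => by
    have hsub : D.map (.subtype (· ∈ c.supp)) ⊆ survivors G k u := fun v hv =>
      compVerts_subset_survivors hd hu (mod_cast hM.trans_lt hcM) (mem_compVerts.2 (by
        obtain ⟨w, -, rfl⟩ := Finset.mem_map.1 hv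
        exact w.2))
    have hle := le_card_inter_of_subset hsub (survivors_mono hs) hup
    rw [Finset.card_map] at hle
    rw [card_supp_eq_card_compVerts] at hD
    have := Nat.cast_le (α := ℝ).2 hD
    push_cast at this
    linarith
  have hSq : (S.card : ℝ) * ((d : ℝ) + 1) ^ (r + r) ≤ q * ((d : ℝ) + 1) ^ (r + r) := by gcongr
  have hBlt := hlink.card_inter_lt (hmono hs) (hmono ht) (openGraph_le hu) hd hN
    ((Finset.disjoint_map _).2 hAB) hA.of_induce_supp hB.of_induce_supp
    (by rw [Finset.card_map]; exact lt_of_le_of_lt (by gcongr) hq)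
    (by rw [Finset.card_map]; linarith [hlarge A hAcard])
  rw [Finset.card_map] at hBlt
  linarith [hlarge B hBcard]

end Separators

section UnionBounds

variable {W : Type} [Fintype W] {G : SimpleGraph W} {d k : ℕ} {ε h m p : ℝ}

theorem bernoulliProb_not_piecesLinked_le {E : Finset (Sym2 W)} {ρ : ℝ} (h0 : 0 ≤ p)
    (h1 : p ≤ 1) (hρ : 0 ≤ ρ)
    (hlink : ∀ A B : Finset W, Disjoint A B → h ≤ A.card → h ≤ B.card →
      bernoulliProb E p (fun t => ¬IsEdgeLinked (openGraph t) m A B) ≤ ρ)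
    (H : SimpleGraph W) (r : ℕ) (N : Finset W) :
    bernoulliProb E p (fun t => ¬PiecesLinked H (openGraph t) r h m N) ≤ 4 ^ N.card * ρ := by
  let bad (IJ : Finset W × Finset W) (t : Finset (Sym2 W)) : Prop :=
    Disjoint (nbhd H r IJ.1) (nbhd H r IJ.2) ∧ h ≤ (nbhd H r IJ.1).card ∧
      h ≤ (nbhd H r IJ.2).card ∧ ¬IsEdgeLinked (openGraph t) m (nbhd H r IJ.1) (nbhd H r IJ.2)
  have hbad : ∀ IJ, bernoulliProb E p (bad IJ) ≤ ρ := fun IJ => by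
    by_cases hIJ : Disjoint (nbhd H r IJ.1) (nbhd H r IJ.2) ∧ h ≤ (nbhd H r IJ.1).card ∧
      h ≤ (nbhd H r IJ.2).card
    · exact (bernoulliProb_mono h0 h1 fun t _ ht => ht.2.2.2).trans
        (hlink _ _ hIJ.1 hIJ.2.1 hIJ.2.2)
    · refine (bernoulliProb_mono (Q := fun _ => False) h0 h1 fun t _ ht =>
        hIJ ⟨ht.1, ht.2.1, ht.2.2.1⟩).trans ?_
      simpa [bernoulliProb, bernoulliExp_const] using hρ
  calc bernoulliProb E p (fun t => ¬PiecesLinked H (openGraph t) r h m N)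
      ≤ bernoulliProb E p (fun t => ∃ IJ ∈ N.powerset ×ˢ N.powerset, bad IJ t) := by
        refine bernoulliProb_mono h0 h1 fun t _ ht => ?_
        simp only [PiecesLinked, not_forall] at ht
        obtain ⟨I, hI, J, hJ, hdis, hIh, hJh, hIJ⟩ := ht
        exact ⟨(I, J), Finset.mk_mem_product (Finset.mem_powerset.2 hI)
          (Finset.mem_powerset.2 hJ), hdis, hIh, hJh, hIJ⟩
    _ ≤ ∑ IJ ∈ N.powerset ×ˢ N.powerset, bernoulliProb E p (bad IJ) :=
        bernoulliProb_exists_le_sum E h0 h1 _ bad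
    _ ≤ (N.powerset ×ˢ N.powerset).card • ρ := Finset.sum_le_card_nsmul _ _ _ fun IJ _ => hbad IJ
    _ = 4 ^ N.card * ρ := by
        rw [Finset.card_product, Finset.card_powerset, ← mul_pow]
        simp

theorem four_pow_mul_exp_le {j n : ℕ} {γ : ℝ} (hk : 2 * Real.log 4 ≤ γ * k) (hj : j * k ≤ n)
    (hγ : 0 ≤ γ) : 4 ^ j * Real.exp (-γ * n) ≤ Real.exp (-(γ / 2) * n) := by
  rw [← Real.rpow_natCast, Real.rpow_def_of_pos (by norm_num), ← Real.exp_add, Real.exp_le_exp]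
  have hj' : (j : ℝ) * k ≤ n := mod_cast hj
  linarith [mul_le_mul_of_nonneg_right hk (Nat.cast_nonneg (α := ℝ) j),
    mul_le_mul_of_nonneg_left hj' hγ]

/-- An exponential rate for the deviations of the number of survivors by `ε` times the number of
vertices. -/
def survivorRate (d k : ℕ) (ε : ℝ) : ℝ := 2 * ε ^ 2 / (d * ((d + 1) ^ (k + 1)) ^ 2)

theorem bernoulliProb_card_survivors_tails (hd : ∀ v, (G.neighborSet v).ncard = d)
    (hg : (2 * (k + 1) : ℕ) < G.egirth) (h0 : 0 ≤ p) (h1 : p ≤ 1) (hε : 0 ≤ ε) :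
    bernoulliProb (edgeFinset' G) p
        (fun s => ((survivors G k s).card : ℝ) ≤ (rootSurv d p k - ε) * Fintype.card W) ≤
      Real.exp (-survivorRate d k ε * Fintype.card W) ∧
    bernoulliProb (edgeFinset' G) p
        (fun s => (rootSurv d p k + ε) * Fintype.card W ≤ ((survivors G k s).card : ℝ)) ≤
      Real.exp (-survivorRate d k ε * Fintype.card W) := by
  set n := Fintype.card W
  have hbd := hasBoundedDifferences_card_survivors (fun v => (hd v).le) (G := G) k
  have hD : (edgeFinset' G).card * (((d : ℝ) + 1) ^ (k + 1)) ^ 2 ≤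
      n * (d * ((d + 1) ^ (k + 1)) ^ 2) := by
    rw [← mul_assoc]
    have : ((edgeFinset' G).card : ℝ) ≤ n * d :=
      mod_cast card_edgeFinset'_le fun v => (hd v).le
    gcongr
  have hrate : ∀ D : ℝ, -2 * (ε * n) ^ 2 / (n * D) = -(2 * ε ^ 2 / D) * n := fun D =>
    calc -2 * (ε * n) ^ 2 / (n * D) = -(2 * ε ^ 2 / D) * (n * n / n) := by ring
      _ = _ := by rw [mul_self_div_self]
  have hlow := hbd.bernoulliProb_le_sub_le h0 h1 hD (a := ε * n) (by positivity)
  have hupp := hbd.bernoulliProb_add_le_le h0 h1 hD (a := ε * n) (by positivity)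
  rw [hrate, bernoulliExp_card_survivors hd hg, mul_comm (n : ℝ)] at hlow hupp
  simp only [survivorRate, sub_mul, add_mul]
  exact ⟨hlow, hupp⟩

end UnionBounds

section Sprinkling

variable {W : Type} [Fintype W] {G : SimpleGraph W} {p p₁ p₂ : ℝ} {d k : ℕ}

theorem percProb_eq_bernoulliProb (G : SimpleGraph W) (p : ℝ) (P : SimpleGraph W → Prop) :
    percProb G p P = bernoulliProb (edgeFinset' G) p (fun s => P (openGraph s)) := rfl

theorem percProb_mono (h0 : 0 ≤ p) (h1 : p ≤ 1) {P Q : SimpleGraph W → Prop} (h : ∀ H, P H → Q H) :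
    percProb G p P ≤ percProb G p Q :=
  bernoulliProb_mono h0 h1 fun s _ => h (openGraph s)

theorem bernoulliProb_not_largestCompsUnseparated_le {h m q x y M ρ : ℝ}
    (hp₁ : p₁ ∈ Set.Icc 0 1) (hp₂ : p₂ ∈ Set.Icc 0 1) (hp : 1 - p = (1 - p₁) * (1 - p₂))
    (hd : ∀ v, (G.neighborSet v).ncard ≤ d) (hg : (k + 1 : ℕ) < G.egirth) (hm : 0 < m)
    (hh : 0 ≤ h) (hM : ((d : ℝ) + 1) ^ k ≤ M) (hx : 2 * h + M ≤ x) (hq : q * d < m)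
    (hbal : h + q * ((d : ℝ) + 1) ^ (4 * (k + 1)) + (y - x) + q ≤ M / 3)
    (hlink : ∀ A B : Finset W, Disjoint A B → h ≤ A.card → h ≤ B.card →
      bernoulliProb (edgeFinset' G) p₂ (fun t => ¬IsEdgeLinked (openGraph t) m A B) ≤ ρ)
    (hρ : 0 ≤ ρ) :
    ∃ j, j * (k + 2) ≤ Fintype.card W ∧
      bernoulliProb (edgeFinset' G) p (fun u => ¬LargestCompsUnseparated (openGraph u) q) ≤
        bernoulliProb (edgeFinset' G) p₁ (fun s => ((survivors G k s).card : ℝ) ≤ x) +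
        bernoulliProb (edgeFinset' G) p (fun s => y ≤ ((survivors G k s).card : ℝ)) +
        4 ^ j * ρ := by
  have hr : 4 * (k + 1) = k + 1 + (k + 1) + (k + 1 + (k + 1)) := by ring
  choose N hNsub hNdis hNcover using fun s =>
    exists_net (openGraph s) (k + 1) (survivors G k s)
  have hNcard : ∀ s, (N s).card ≤ Fintype.card W / (k + 2) := fun s =>
    (Nat.le_div_iff_mul_le (by omega)).2
      (card_mul_le_of_pairwiseDisjoint_closedBall (hNdis s) fun v hv =>
        le_card_closedBall_of_survives hg (mem_survivors.1 (hNsub s hv)))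
  refine ⟨Fintype.card W / (k + 2), Nat.div_mul_le_self _ _,
    bernoulliProb_union_le hp₁.1 hp₁.2 hp₂.1 hp₂.2 hp (Z := fun s t =>
      ¬PiecesLinked (openGraph s) (openGraph t) (k + 1 + (k + 1)) h m (N s)) ?_ fun s _ => ?_⟩
  · intro s t u hs ht hu
    contrapose!
    rintro ⟨hlow, hupp, hpieces⟩
    exact hpieces.largestCompsUnseparated hd hu hs ht (hNcover s) hm hh hM (hx.trans hlow.le)
      (e := y - x) (by linarith) hq (by rwa [hr] at hbal)
  · refine (bernoulliProb_not_piecesLinked_le hp₂.1 hp₂.2 hρ hlink _ _ _).trans ?_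
    gcongr
    · norm_num
    · exact hNcard s

theorem exists_sprinkling (hd : 3 ≤ d) (h0 : 0 < p) (h1 : p < 1) (hdp : 1 < (d - 1 : ℕ) * p) :
    ∃ ε > 0, ∃ p₁ ∈ Set.Icc (0 : ℝ) 1, ∃ p₂ ∈ Set.Ioc (0 : ℝ) 1, 1 - p = (1 - p₁) * (1 - p₂) ∧
      ∀ k, 34 * ε ≤ rootSurv d p₁ k ∧ rootSurv d p k ≤ rootSurv d p₁ k + ε := by
  obtain ⟨w, hw, hclose⟩ := exists_rootSurv_le_add hd h0 h1.le hdp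
  obtain ⟨p₁, hp₁, hp₁p, hsurv⟩ := hclose (w / 34) (by positivity)
  have hp₁' : 0 < 1 - p₁ := by linarith
  refine ⟨w / 34, by positivity, p₁, ⟨hp₁.le, by linarith⟩, 1 - (1 - p) / (1 - p₁),
    ⟨sub_pos.2 ((div_lt_one hp₁').2 (by linarith)),
      sub_le_self _ (div_nonneg (by linarith) hp₁'.le)⟩, by field_simp; ring, fun k => ?_⟩
  exact (hsurv k).imp_left (mul_div_cancel₀ w (by norm_num : (34 : ℝ) ≠ 0)).trans_le

/-- The numerical constants come from the budget of densities `34 = 27 + 2 * 3 + 1`, spent on a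
component of density `27 * ε`, two linked sets of density `3 * ε` and a fluctuation `ε` of the
survivors, and `27 / 3 = 3 + 3 + 3`, spent on one linked set, the separator with its neighbourhood,
and the survivors gained by sprinkling. -/
theorem le_percProb_largestCompsUnseparated [Nonempty W] {δ γ ε κ : ℝ}
    (hp₁ : p₁ ∈ Set.Icc 0 1) (hp₂ : p₂ ∈ Set.Icc 0 1) (hp : 1 - p = (1 - p₁) * (1 - p₂))
    (hp0 : 0 ≤ p) (hp1 : p ≤ 1)
    (hd : ∀ v, (G.neighborSet v).ncard = d) (hg : (2 * (k + 1) : ℕ) < G.egirth)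
    (hε : 0 ≤ ε) (hε₁ : 34 * ε ≤ rootSurv d p₁ k)
    (hε₂ : rootSurv d p k ≤ rootSurv d p₁ k + ε)
    (hM : ((d : ℝ) + 1) ^ k ≤ 27 * ε * Fintype.card W)
    (hκ : 0 < κ) (hδκ : δ * d < κ)
    (hδε : δ * (((d : ℝ) + 1) ^ (4 * (k + 1)) + 1) ≤ 3 * ε) (hγ : 0 ≤ γ)
    (hk : 2 * Real.log 4 ≤ γ * k)
    (hlink : ∀ A B : Finset W, Disjoint A B →
      3 * ε * Fintype.card W ≤ A.card → 3 * ε * Fintype.card W ≤ B.card →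
      bernoulliProb (edgeFinset' G) p₂
        (fun t => ¬IsEdgeLinked (openGraph t) (κ * Fintype.card W) A B) ≤
        Real.exp (-γ * Fintype.card W)) :
    1 - 3 * Real.exp (-min (survivorRate d k ε) (γ / 2) * Fintype.card W) ≤
      percProb G p (LargestCompsUnseparated · (δ * Fintype.card W)) := by
  have hn : (0 : ℝ) < Fintype.card W := mod_cast Fintype.card_pos
  obtain ⟨j, hj, hle⟩ := bernoulliProb_not_largestCompsUnseparated_le (q := δ * Fintype.card W)
    (x := (rootSurv d p₁ k - ε) * Fintype.card W) (y := (rootSurv d p k + ε) * Fintype.card W)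
    hp₁ hp₂ hp (fun v => (hd v).le) (lt_of_le_of_lt (Nat.cast_le.2 (by omega)) hg)
    (by positivity) (by positivity) hM (by nlinarith) (by nlinarith) (by nlinarith) hlink
    (Real.exp_pos _).le
  have hlow := (bernoulliProb_card_survivors_tails hd hg hp₁.1 hp₁.2 hε).1
  have hupp := (bernoulliProb_card_survivors_tails hd hg hp0 hp1 hε).2
  have hpieces := four_pow_mul_exp_le hk (le_trans (by gcongr; omega) hj) hγ
  have hmin : ∀ r, min (survivorRate d k ε) (γ / 2) ≤ r → Real.exp (-r * Fintype.card W) ≤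
      Real.exp (-min (survivorRate d k ε) (γ / 2) * Fintype.card W) := fun r hr => by gcongr
  rw [bernoulliProb_not] at hle
  rw [percProb_eq_bernoulliProb]
  linarith [hmin _ (min_le_left _ _), hmin _ (min_le_right _ _)]

end Sprinkling

theorem girth_le_card {α : Type*} [Fintype α] (G : SimpleGraph α) :
    G.girth ≤ Fintype.card α := by
  by_cases hG : G.IsAcyclic
  · simp [SimpleGraph.girth_eq_zero.2 hG]
  · obtain ⟨a, q, hq, hlen⟩ := SimpleGraph.exists_girth_eq_length.2 hG
    rw [hlen]
    simpa using hq.support_nodup.length_le_card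

theorem giant_has_no_small_separator (d : ℕ) (hd : 3 ≤ d) (p : ℝ)
    (hp : 1 / ((d : ℝ) - 1) < p) (hp1 : p < 1) (b : ℝ) (hb : 0 < b) :
    ∃ δ > (0:ℝ), ∃ c > (0:ℝ), ∃ C > (0:ℝ), ∃ R : ℕ, 0 < R ∧
      ∀ (V : Type) [Fintype V] [DecidableEq V] (G : SimpleGraph V),
        IsRegularExpander G b d → (R : ℕ∞) < G.girth →
        1 - C * Real.exp (-c * Fintype.card V) ≤
          percProb G p (fun H =>
            ∀ c₁ : H.ConnectedComponent, IsLargestComp H c₁ →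
              ∀ S : Finset (c₁.supp), (S.card : ℝ) ≤ δ * Fintype.card V →
                ¬ IsSeparator (H.induce c₁.supp) S) := by
  have hd' : (3 : ℝ) ≤ d := mod_cast hd
  have hp0 : 0 < p := lt_trans (one_div_pos.2 (by linarith)) hp
  rw [div_lt_iff₀' (by linarith)] at hp
  obtain ⟨ε, hε, p₁, hp₁, p₂, hp₂, hpp, hsurv⟩ :=
    exists_sprinkling hd hp0 hp1 (by rwa [Nat.cast_pred (by omega)])
  obtain ⟨κ, hκ, γ, hγ, hlink⟩ := exists_bernoulliProb_not_isEdgeLinked_le (d := d) (by omega) hb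
    (mul_pos three_pos hε) hp₂.1 hp₂.2
  obtain ⟨k, hk⟩ := exists_nat_ge (2 * Real.log 4 / γ)
  obtain ⟨R, hR⟩ := exists_nat_ge (((d : ℝ) + 1) ^ k / (27 * ε))
  obtain ⟨δ, hδ, hδ'⟩ : ∃ δ > 0, δ < min (κ / d) (3 * ε / ((d + 1) ^ (4 * (k + 1)) + 1)) :=
    exists_between (by positivity)
  rw [lt_min_iff, lt_div_iff₀ (by linarith), lt_div_iff₀ (by positivity)] at hδ'
  refine ⟨δ, hδ, min (survivorRate d k ε) (γ / 2), lt_min (by unfold survivorRate; positivity)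
    (by positivity), 3, three_pos, max R (2 * (k + 1)), by positivity, fun V _ _ G hG hg => ?_⟩
  obtain ⟨hgR, hgk⟩ := max_lt_iff.1 (Nat.cast_lt.1 hg)
  have hRn : R < Fintype.card V := hgR.trans_le (girth_le_card G)
  have : Nonempty V := Fintype.card_pos_iff.1 (R.zero_le.trans_lt hRn)
  refine (le_percProb_largestCompsUnseparated hp₁ ⟨hp₂.1.le, hp₂.2⟩ hpp hp0.le hp1.le hG.2
    ((Nat.cast_lt.2 hgk).trans_le (ENat.natCast_toNat_le_self _)) hε.le (hsurv k).1 (hsurv k).2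
    ((div_le_iff₀' (by positivity)).1 (hR.trans (Nat.cast_le.2 hRn.le))) hκ hδ'.1
    hδ'.2.le hγ.le ((div_le_iff₀' hγ).1 hk) (hlink V G hG.1)).trans ?_
  exact percProb_mono hp0.le hp1.le fun H h c hc S hS => h c hc S hS

end Percolation

end
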